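/- arXiv:0705.2975 — 3 statements merged into one kernel-verified Lean document; each statement's English description precedes it below -/
import Mathlib

section
/- Let k ⊆ K be difference fields of characteristic zero such that K is generated as a field over k by C_K. Let A ∈ GL_n(k), let Y be an n×n matrix of indeterminates with σ(Y) = AY, and let R = k[Y, 1/det(Y)]/q be a Picard-Vessiot ring for σ(X) = AX over k with C_R = C_k, where q is a maximal σ-ideal of k[Y, 1/det(Y)]. Then S = K[Y, 1/det(Y)]/(q·K[Y, 1/det(Y)]) is a Picard-Vessiot ring for σ(X) = AX over K, and C_S = C_K. -/
open scoped TensorProduct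

noncomputable section

namespace PV

set_option synthInstance.maxHeartbeats 1000000

/-! Basic difference-algebra vocabulary -/

theorem iter_mul {R : Type*} [Ring R] (σ : R ≃+* R) :
    ∀ (m : ℕ) (a b : R), (⇑σ)^[m] (a * b) = (⇑σ)^[m] a * (⇑σ)^[m] b := by
  intro m
  induction m with
  | zero => intro a b; rfl
  | succ k ih =>
    intro a b
    simp only [Function.iterate_succ_apply, map_mul]
    exact ih _ _

theorem iter_add {R : Type*} [Ring R] (σ : R ≃+* R) :
    ∀ (m : ℕ) (a b : R), (⇑σ)^[m] (a + b) = (⇑σ)^[m] a + (⇑σ)^[m] b := by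
  intro m
  induction m with
  | zero => intro a b; rfl
  | succ k ih =>
    intro a b
    simp only [Function.iterate_succ_apply, map_add]
    exact ih _ _

theorem iter_neg {R : Type*} [Ring R] (σ : R ≃+* R) :
    ∀ (m : ℕ) (a : R), (⇑σ)^[m] (-a) = -((⇑σ)^[m] a) := by
  intro m
  induction m with
  | zero => intro a; rfl
  | succ k ih =>
    intro a
    simp only [Function.iterate_succ_apply, map_neg]
    exact ih _

theorem iter_inv {K : Type*} [Field K] (σ : K ≃+* K) :
    ∀ (m : ℕ) (a : K), (⇑σ)^[m] a⁻¹ = ((⇑σ)^[m] a)⁻¹ := by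
  intro m
  induction m with
  | zero => intro a; rfl
  | succ k ih =>
    intro a
    simp only [Function.iterate_succ_apply, map_inv₀]
    exact ih _

/-- The subring of constants of a difference ring. -/
def constants {R : Type*} [Ring R] (σ : R ≃+* R) : Subring R where
  carrier := {r | σ r = r}
  one_mem' := map_one σ
  mul_mem' := fun {a b} ha hb => by
    simp only [Set.mem_setOf_eq] at *
    rw [map_mul, ha, hb]
  add_mem' := fun {a b} ha hb => by
    simp only [Set.mem_setOf_eq] at *
    rw [map_add, ha, hb]
  zero_mem' := map_zero σ
  neg_mem' := fun {a} ha => by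
    simp only [Set.mem_setOf_eq] at *
    rw [map_neg, ha]

/-- The subfield of constants of a difference field. -/
def constantsF {K : Type*} [Field K] (σ : K ≃+* K) : Subfield K :=
  { constants σ with
    inv_mem' := fun a ha => by
      show σ a⁻¹ = a⁻¹
      rw [map_inv₀]
      exact congrArg Inv.inv ha }

/-- The subring `D_R` of elements fixed by some positive power of `σ`. -/
def periodic {R : Type*} [Ring R] (σ : R ≃+* R) : Subring R where
  carrier := {a | ∃ m, 0 < m ∧ (⇑σ)^[m] a = a}
  one_mem' := ⟨1, one_pos, by simp⟩
  zero_mem' := ⟨1, one_pos, by simp⟩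
  mul_mem' := fun {a b} ha hb => by
    obtain ⟨m, hm, ha⟩ := ha
    obtain ⟨m', hm', hb⟩ := hb
    refine ⟨m * m', Nat.mul_pos hm hm', ?_⟩
    rw [iter_mul]
    have h1 : (⇑σ)^[m * m'] a = a := by
      rw [Function.iterate_mul]; exact Function.iterate_fixed ha m'
    have h2 : (⇑σ)^[m * m'] b = b := by
      rw [mul_comm, Function.iterate_mul]; exact Function.iterate_fixed hb m
    rw [h1, h2]
  add_mem' := fun {a b} ha hb => by
    obtain ⟨m, hm, ha⟩ := ha
    obtain ⟨m', hm', hb⟩ := hb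
    refine ⟨m * m', Nat.mul_pos hm hm', ?_⟩
    rw [iter_add]
    have h1 : (⇑σ)^[m * m'] a = a := by
      rw [Function.iterate_mul]; exact Function.iterate_fixed ha m'
    have h2 : (⇑σ)^[m * m'] b = b := by
      rw [mul_comm, Function.iterate_mul]; exact Function.iterate_fixed hb m
    rw [h1, h2]
  neg_mem' := fun {a} ha => by
    obtain ⟨m, hm, ha⟩ := ha
    exact ⟨m, hm, by rw [iter_neg, ha]⟩

/-- The subfield `D_L` of a difference field: elements fixed by some positive power of `σ`. -/
def periodicF {K : Type*} [Field K] (σ : K ≃+* K) : Subfield K :=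
  { periodic σ with
    inv_mem' := fun a ha => by
      obtain ⟨m, hm, ha⟩ := ha
      exact ⟨m, hm, by rw [iter_inv, ha]⟩ }

/-- The degree `[F : E]` of nested subfields of a field. -/
def subdeg {X : Type*} [Field X] (E F : Subfield X) (h : E ≤ F) : ℕ :=
  letI : Algebra E F := (Subfield.inclusion h).toAlgebra
  Module.finrank E F

/-- `F` is a finite extension of the subfield `E` (both subfields of a common field). -/
def SubfieldFinite {X : Type*} [Field X] (E F : Subfield X) : Prop :=
  ∃ h : E ≤ F,
    letI : Algebra E F := (Subfield.inclusion h).toAlgebra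
    Module.Finite E F

/-- `σR` extends `σk` along `algebraMap k R`. -/
def DiffCompat {k R : Type*} [CommRing k] [CommRing R] [Algebra k R]
    (σk : k ≃+* k) (σR : R ≃+* R) : Prop :=
  ∀ x : k, σR (algebraMap k R x) = algebraMap k R (σk x)

/-- the constants of `R` are (the image of) the constants of `k`: `C_R = C_k`. -/
def ConstantsMatch {k R : Type*} [CommRing k] [CommRing R] [Algebra k R]
    (σk : k ≃+* k) (σR : R ≃+* R) : Prop :=
  ∀ r : R, σR r = r → ∃ c : k, σk c = c ∧ algebraMap k R c = r

/-- A difference ring is simple if its only σ-invariant ideals are `⊥` and `⊤`. -/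
def IsSimpleDiff {R : Type*} [CommRing R] (σ : R ≃+* R) : Prop :=
  ∀ I : Ideal R, (∀ x ∈ I, σ x ∈ I) → I = ⊥ ∨ I = ⊤

/-- The set of entries of a square matrix. -/
def entries {R : Type*} {n : ℕ} (M : Matrix (Fin n) (Fin n) R) : Set R :=
  Set.range fun p : Fin n × Fin n => M p.1 p.2

/-- `Z` is a fundamental solution matrix for `σ(X) = A X`:  `σ Z = A Z` entrywise. -/
def FundMatrix {k R : Type*} {n : ℕ} [CommRing k] [CommRing R] [Algebra k R]
    (σR : R ≃+* R) (A : (Matrix (Fin n) (Fin n) k)ˣ) (Z : (Matrix (Fin n) (Fin n) R)ˣ) : Prop :=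
  Z.val.map ⇑σR = A.val.map (algebraMap k R) * Z.val

/-- `R` is a Picard-Vessiot ring for `σ(X) = A X` over `k`. -/
def IsPVRing {k R : Type*} {n : ℕ} [CommRing k] [CommRing R] [Algebra k R]
    (σk : k ≃+* k) (σR : R ≃+* R) (A : (Matrix (Fin n) (Fin n) k)ˣ) : Prop :=
  DiffCompat σk σR ∧ IsSimpleDiff σR ∧
    ∃ Z : (Matrix (Fin n) (Fin n) R)ˣ, FundMatrix σR A Z ∧
      Algebra.adjoin k (entries Z.val ∪ entries (↑Z⁻¹ : Matrix (Fin n) (Fin n) R)) = ⊤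

/-- `R` is a weak Picard-Vessiot ring for `σ(X) = A X` over `k`. -/
def IsWeakPVRing {k R : Type*} {n : ℕ} [CommRing k] [CommRing R] [Algebra k R]
    (σk : k ≃+* k) (σR : R ≃+* R) (A : (Matrix (Fin n) (Fin n) k)ˣ) : Prop :=
  DiffCompat σk σR ∧ ConstantsMatch σk σR ∧
    ∃ Z : (Matrix (Fin n) (Fin n) R)ˣ, FundMatrix σR A Z ∧
      Algebra.adjoin k (entries Z.val ∪ entries (↑Z⁻¹ : Matrix (Fin n) (Fin n) R)) = ⊤

/-! The generic difference ring `k[Y, 1/det Y]` -/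

/-- The generic `n × n` matrix with polynomial indeterminate entries. -/
def genMat (k : Type*) [CommRing k] (n : ℕ) :
    Matrix (Fin n) (Fin n) (MvPolynomial (Fin n × Fin n) k) :=
  Matrix.of fun i j => MvPolynomial.X (i, j)

/-- The generic ring `k[Y_{ij}, 1/det Y]`. -/
abbrev GenRing (k : Type*) [CommRing k] (n : ℕ) : Type _ :=
  Localization.Away (genMat k n).det

/-- The images of the indeterminates `Y_{ij}` in the generic ring. -/
def Yent (k : Type*) [CommRing k] (n : ℕ) (i j : Fin n) : GenRing k n :=
  algebraMap (MvPolynomial (Fin n × Fin n) k) (GenRing k n) (genMat k n i j)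

/-- The inverse of `det Y` in the generic ring. -/
def invDet (k : Type*) [CommRing k] (n : ℕ) : GenRing k n :=
  IsLocalization.Away.invSelf (genMat k n).det

/-- The transcendence degree of `L` over `F` equals `d`. -/
def TrdegEq (F L : Type*) [Field F] [Field L] [Algebra F L] (d : ℕ) : Prop :=
  ∃ s : Finset L, s.card = d ∧
    AlgebraicIndependent F (Subtype.val : ((s : Set L)) → L) ∧
    Algebra.IsAlgebraic (IntermediateField.adjoin F (s : Set L)) L

/-! decompositions into primitive idempotents and the `m`-invariant -/

/-- `e` lists the primitive idempotents of a difference ring, permuted cyclically by `σ`. -/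
def IsDecomp {R' : Type*} [CommRing R'] (σ' : R' ≃+* R') {ℓ : ℕ} (e : Fin ℓ → R') : Prop :=
  (∀ i, IsIdempotentElem (e i)) ∧
  (Pairwise fun i j => e i * e j = 0) ∧
  (∑ i, e i) = 1 ∧
  (∀ i, e i ≠ 0 ∧ ∀ f : R', IsIdempotentElem f → f * e i = f → f = 0 ∨ f = e i) ∧
  (∀ i : Fin ℓ, σ' (e i) = e ⟨(i.1 + 1) % ℓ, Nat.mod_lt _ (Nat.zero_lt_of_lt i.isLt)⟩)

/-- The `m`-invariant of a Picard-Vessiot ring `R'` over `K` equals `m`: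
`m = ℓ(R') * [D_{R₀*} : D_K · C_{R₀*}]`, where `R₀` is the quotient of `R'` by the ideal
generated by `1 - e₀`, and `R₀*` is its fraction field carrying the automorphism induced
by `σ'^ℓ`. -/
def HasMInvariant {K R' : Type*} [Field K] [CommRing R'] [Algebra K R']
    (σK : K ≃+* K) (σ' : R' ≃+* R') (m : ℕ) : Prop :=
  ∃ (ℓ : ℕ) (hℓ : 0 < ℓ) (e : Fin ℓ → R'), IsDecomp σ' e ∧
    ∀ (hdom : IsDomain (R' ⧸ Ideal.span {1 - e ⟨0, hℓ⟩})),
      letI : IsDomain (R' ⧸ Ideal.span {1 - e ⟨0, hℓ⟩}) := hdom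
      ∀ (σQ : FractionRing (R' ⧸ Ideal.span {1 - e ⟨0, hℓ⟩}) ≃+*
              FractionRing (R' ⧸ Ideal.span {1 - e ⟨0, hℓ⟩})),
        (∀ x : R',
            σQ (algebraMap (R' ⧸ Ideal.span {1 - e ⟨0, hℓ⟩})
                  (FractionRing (R' ⧸ Ideal.span {1 - e ⟨0, hℓ⟩}))
                  (Ideal.Quotient.mk (Ideal.span {1 - e ⟨0, hℓ⟩}) x)) =
            algebraMap (R' ⧸ Ideal.span {1 - e ⟨0, hℓ⟩})
                  (FractionRing (R' ⧸ Ideal.span {1 - e ⟨0, hℓ⟩}))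
                  (Ideal.Quotient.mk (Ideal.span {1 - e ⟨0, hℓ⟩}) ((⇑σ')^[ℓ] x))) →
        ∃ h : Subfield.closure
              ((⇑((algebraMap (R' ⧸ Ideal.span {1 - e ⟨0, hℓ⟩})
                    (FractionRing (R' ⧸ Ideal.span {1 - e ⟨0, hℓ⟩}))).comp
                  ((Ideal.Quotient.mk (Ideal.span {1 - e ⟨0, hℓ⟩})).comp (algebraMap K R'))) ''
                 {a : K | ∃ m', 0 < m' ∧ (⇑σK)^[m'] a = a}) ∪
               (constantsF σQ : Set (FractionRing (R' ⧸ Ideal.span {1 - e ⟨0, hℓ⟩})))) ≤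
              periodicF σQ,
          m = ℓ * subdeg _ _ h

/-!
Since `R` is simple with `C_R = C_k`, constants of `K` that are linearly independent over `C_k`
stay linearly independent over `R` in `S`. Hence the subring `R[C_K]` of `S` behaves like
`R ⊗ C_K`: by a shortest-relation argument, every σ-stable `R`-submodule of `S` that contains a
nonzero element of `R[C_K]` contains a nonzero constant of `K`. Because `K = k(C_K)`, each element
of `S` is moved into `R[C_K]` by a nonzero element of `k[C_K]`. Applied to a nonzero σ-ideal of
`S`, this produces a unit in it; applied to `{x | x s ∈ R[C_K]}` for a constant `s` of `S`, it
writes `s` as a quotient of two constants of `K`.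
-/

section ConstantVectors

variable {R M ι : Type*} [CommRing R] [AddCommGroup M] [Module R M] {σ : R ≃+* R}

/-- The support of `f` is taken minimal and a coordinate `b` of `f` is normalised to `1`; then
`σ f - f` has smaller support. -/
theorem IsSimpleDiff.exists_constant_finsupp (hσ : IsSimpleDiff σ) {N : Submodule R (ι →₀ R)}
    (hN : ∀ f ∈ N, f.mapRange σ (map_zero σ) ∈ N) (hN0 : N ≠ ⊥) :
    ∃ f ∈ N, f ≠ 0 ∧ ∀ i, σ (f i) = f i := by
  classical
  obtain ⟨f₀, ⟨hf₀N, hf₀⟩, hmin⟩ := exists_minimalFor_of_wellFoundedLT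
    (fun f => f ∈ N ∧ f ≠ 0) Finsupp.support (N.ne_bot_iff.mp hN0)
  obtain ⟨b, hb⟩ := Finsupp.support_nonempty_iff.mpr hf₀
  let J : Ideal R := (N ⊓ Finsupp.supported R R f₀.support).map (Finsupp.lapply b)
  have hJσ : ∀ r ∈ J, σ r ∈ J := by
    rintro _ ⟨f, ⟨hfN, hfs⟩, rfl⟩
    have hs : (f.mapRange σ (map_zero σ)).support ⊆ f₀.support :=
      Finsupp.support_mapRange.trans (Finset.coe_subset.mp hfs)
    exact ⟨_, ⟨hN f hfN, Finset.coe_subset.mpr hs⟩, Finsupp.mapRange_apply (hf := map_zero σ)⟩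
  have hJ : J ≠ ⊥ := fun h => Finsupp.mem_support_iff.mp hb <|
    (Submodule.eq_bot_iff J).mp h _ ⟨f₀, ⟨hf₀N, Finset.Subset.refl f₀.support⟩, rfl⟩
  obtain ⟨f, ⟨hfN, hfs⟩, hfb : f b = 1⟩ :=
    (Ideal.eq_top_iff_one J).mp ((hσ J hJσ).resolve_left hJ)
  have hfs : f.support ⊆ f₀.support := Finset.coe_subset.mp hfs
  have hfix : f.mapRange σ (map_zero σ) - f = 0 := by
    by_contra hne
    have hsub : (f.mapRange σ (map_zero σ) - f).support ⊆ f₀.support :=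
      Finsupp.support_sub.trans (Finset.union_subset (Finsupp.support_mapRange.trans hfs) hfs)
    have hb' := hmin ⟨N.sub_mem (hN f hfN) hfN, hne⟩ hsub hb
    simp [hfb] at hb'
  refine ⟨f, hfN, ?_, fun i => sub_eq_zero.mp (DFunLike.congr_fun hfix i)⟩
  rintro rfl
  exact Finsupp.mem_support_iff.mp hb (eq_zero_of_zero_eq_one hfb _)

theorem linearCombination_mapRange {τ : M →+ M} (hτ : ∀ (r : R) (m : M), τ (r • m) = σ r • τ m)
    {w : ι → M} (hw : ∀ i, τ (w i) = w i) (f : ι →₀ R) :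
    Finsupp.linearCombination R w (f.mapRange σ (map_zero σ)) =
      τ (Finsupp.linearCombination R w f) := by
  simp only [Finsupp.linearCombination_apply]
  rw [Finsupp.sum_mapRange_index fun i => zero_smul R (w i), Finsupp.sum, Finsupp.sum, map_sum]
  simp only [hτ, hw]

theorem IsSimpleDiff.exists_constant_linearCombination_mem (hσ : IsSimpleDiff σ) {τ : M →+ M}
    (hτ : ∀ (r : R) (m : M), τ (r • m) = σ r • τ m) {w : ι → M} (hw : ∀ i, τ (w i) = w i)
    {P : Submodule R M} (hP : ∀ m ∈ P, τ m ∈ P) {f : ι →₀ R} (hf : f ≠ 0)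
    (hfP : Finsupp.linearCombination R w f ∈ P) :
    ∃ g : ι →₀ R, g ≠ 0 ∧ (∀ i, σ (g i) = g i) ∧ Finsupp.linearCombination R w g ∈ P := by
  obtain ⟨g, hgP, hg, hgσ⟩ :=
    hσ.exists_constant_finsupp (N := P.comap (Finsupp.linearCombination R w))
      (fun h hh => by
        rw [Submodule.mem_comap, linearCombination_mapRange hτ hw]
        exact hP _ hh)
      ((Submodule.ne_bot_iff _).mpr ⟨f, hfP, hf⟩)
  exact ⟨g, hg, hgσ, hgP⟩

end ConstantVectors

theorem algebraMap_mem_adjoin_image {k A B S : Type*} [CommSemiring k] [CommSemiring A]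
    [CommSemiring B] [CommSemiring S] [Algebra k A] [Algebra k B] [Algebra k S] [Algebra A S]
    [Algebra B S] [IsScalarTower k A S] [IsScalarTower k B S] {X : Set A} {x : A}
    (hx : x ∈ Algebra.adjoin k X) :
    algebraMap A S x ∈ Algebra.adjoin B (algebraMap A S '' X) := by
  have h : Algebra.adjoin k X ≤ ((Algebra.adjoin B (algebraMap A S '' X)).restrictScalars k).comap
      (IsScalarTower.toAlgHom k A S) :=
    Algebra.adjoin_le fun y hy => Algebra.subset_adjoin (Set.mem_image_of_mem _ hy)
  exact h hx

theorem adjoin_image_eq_top {k R K S : Type*} [CommSemiring k] [CommSemiring R]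
    [CommSemiring K] [CommSemiring S] [Algebra k R] [Algebra k K] [Algebra k S] [Algebra R S]
    [Algebra K S] [IsScalarTower k R S] [IsScalarTower k K S] {X : Set R}
    (hX : Algebra.adjoin k X = ⊤) (hS : Algebra.adjoin K (Set.range (algebraMap R S)) = ⊤) :
    Algebra.adjoin K (algebraMap R S '' X) = ⊤ := by
  rw [eq_top_iff, ← hS]
  refine Algebra.adjoin_le ?_
  rintro _ ⟨r, rfl⟩
  exact algebraMap_mem_adjoin_image (k := k) (hX ▸ Algebra.mem_top)

section ConstantAdjoin

variable {k K R S : Type*} [Field k] [Field K] [CommRing R] [CommRing S] [Algebra k K]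
  [Algebra k R] [Algebra k S] [Algebra K S] [Algebra R S] [IsScalarTower k K S]
  [IsScalarTower k R S] {σk : k ≃+* k} {σK : K ≃+* K} {σR : R ≃+* R} {σS : S ≃+* S}

variable (σK R S) in
/-- The `R`-subalgebra `R[C_K]` of `S` generated by the constants of `K`, an intermediate step
between `R` and a difference ring `S` generated by `R` over `K = k(C_K)`. -/
def constantAdjoin : Subalgebra R S :=
  Algebra.adjoin R (algebraMap K S '' {x | σK x = x})

theorem DiffCompat.map_smul (hRS : DiffCompat σR σS) (r : R) (s : S) :
    σS (r • s) = σR r • σS s := by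
  rw [Algebra.smul_def, Algebra.smul_def, map_mul, hRS]

theorem map_mem_constantAdjoin (hKS : DiffCompat σK σS) (hRS : DiffCompat σR σS) {x : S}
    (hx : x ∈ constantAdjoin R S σK) : σS x ∈ constantAdjoin R S σK := by
  induction hx using Algebra.adjoin_induction with
  | mem x hx =>
    obtain ⟨c, hc, rfl⟩ := hx
    rw [hKS, hc]
    exact Algebra.subset_adjoin ⟨c, hc, rfl⟩
  | algebraMap r => rw [hRS]; exact Subalgebra.algebraMap_mem _ _
  | add x y _ _ hx hy => rw [map_add]; exact add_mem hx hy
  | mul x y _ _ hx hy => rw [map_mul]; exact mul_mem hx hy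

variable (σK R S) in
theorem constantAdjoin_toSubmodule :
    Subalgebra.toSubmodule (constantAdjoin R S σK) =
      Submodule.span R (algebraMap K S '' {x | σK x = x}) := by
  have hC : algebraMap K S '' {x | σK x = x} =
      ((constants σK).toSubmonoid.map (algebraMap K S) : Set S) := rfl
  rw [constantAdjoin, Algebra.adjoin_eq_span, hC, Submonoid.closure_eq]

theorem algebraMap_mem_span_of_mem_span {E : Subfield k} {X : Set K} {x : K}
    (hx : x ∈ Submodule.span E X) :
    algebraMap K S x ∈ Submodule.span R (algebraMap K S '' X) := by
  induction hx using Submodule.span_induction with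
  | mem x hx => exact Submodule.subset_span (Set.mem_image_of_mem _ hx)
  | zero => rw [map_zero]; exact zero_mem _
  | add x y _ _ hx hy => rw [map_add]; exact add_mem hx hy
  | smul c x _ hx =>
    have hcx : algebraMap K S (c • x) = algebraMap k R c • algebraMap K S x :=
      (map_smul (IsScalarTower.toAlgHom k K S) (c : k) x).trans (algebraMap_smul R (c : k) _).symm
    rw [hcx]
    exact Submodule.smul_mem _ _ hx

variable (σk σK R S) in
theorem exists_linearIndependent_constantAdjoin :
    ∃ b : Set K, (∀ i : b, σK i = i) ∧ LinearIndependent (constantsF σk) ((↑) : b → K) ∧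
      ∀ x ∈ constantAdjoin R S σK,
        ∃ f : b →₀ R, Finsupp.linearCombination R (fun i : b => algebraMap K S i) f = x := by
  obtain ⟨b, hbσ, hbspan, hb⟩ := exists_linearIndependent (constantsF σk) {x | σK x = x}
  refine ⟨b, fun i => hbσ i.2, hb, fun x hx => ?_⟩
  rw [← Subalgebra.mem_toSubmodule, constantAdjoin_toSubmodule] at hx
  have hle : Submodule.span R (algebraMap K S '' {x | σK x = x}) ≤
      Submodule.span R (algebraMap K S '' b) := by
    rw [Submodule.span_le]
    rintro _ ⟨c, hc, rfl⟩
    exact algebraMap_mem_span_of_mem_span (hbspan ▸ Submodule.subset_span hc)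
  have hxb := hle hx
  rwa [Set.image_eq_range, Finsupp.mem_span_range_iff_exists_finsupp] at hxb

theorem ConstantsMatch.exists_constant_eq_linearCombination {ι : Type*}
    (hR : ConstantsMatch σk σR) (hkK : DiffCompat σk σK) {b : ι → K} (hbσ : ∀ i, σK (b i) = b i)
    (hb : LinearIndependent (constantsF σk) b) {f : ι →₀ R} (hf : ∀ i, σR (f i) = f i) :
    ∃ u : K, σK u = u ∧ (f ≠ 0 → u ≠ 0) ∧
      algebraMap K S u = Finsupp.linearCombination R (fun i => algebraMap K S (b i)) f := by
  choose c hcσ hcf using fun i => hR (f i) (hf i)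
  refine ⟨∑ i ∈ f.support, c i • b i, ?_, fun hf0 hu => hf0 ?_, ?_⟩
  · rw [map_sum]
    simp only [DiffCompat.map_smul hkK, hcσ, hbσ]
  · have hc : ∀ i ∈ f.support, (⟨c i, hcσ i⟩ : constantsF σk) = 0 :=
      linearIndependent_iff'.mp hb f.support (fun i => ⟨c i, hcσ i⟩) hu
    ext i
    by_contra hi
    have hci : c i = 0 := congrArg Subtype.val (hc i (Finsupp.mem_support_iff.mpr hi))
    exact hi (by rw [← hcf, hci, map_zero, Finsupp.zero_apply])
  · simp only [Finsupp.linearCombination_apply, Finsupp.sum, map_sum, ← hcf, algebraMap_smul]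
    exact Finset.sum_congr rfl fun i _ => map_smul (IsScalarTower.toAlgHom k K S) (c i) (b i)

theorem IsSimpleDiff.linearIndependent_algebraMap_constants {ι : Type*} [Nontrivial S]
    (hσR : IsSimpleDiff σR) (hR : ConstantsMatch σk σR) (hkK : DiffCompat σk σK)
    (hKS : DiffCompat σK σS) (hRS : DiffCompat σR σS) {b : ι → K} (hbσ : ∀ i, σK (b i) = b i)
    (hb : LinearIndependent (constantsF σk) b) :
    LinearIndependent R fun i => algebraMap K S (b i) := by
  rw [linearIndependent_iff]
  intro f hf
  by_contra hf0
  obtain ⟨g, hg, hgσ, hgbot⟩ := hσR.exists_constant_linearCombination_mem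
    (τ := (σS : S →+ S)) (P := ⊥) hRS.map_smul (fun i => (hKS _).trans (by rw [hbσ]))
    (by simp) hf0 hf
  obtain ⟨u, -, hu0, hu⟩ := hR.exists_constant_eq_linearCombination (S := S) hkK hbσ hb hgσ
  rw [(Submodule.mem_bot R).mp hgbot, map_eq_zero] at hu
  exact hu0 hg hu

theorem IsSimpleDiff.exists_constant_mem_of_mem_constantAdjoin (hσR : IsSimpleDiff σR)
    (hR : ConstantsMatch σk σR) (hkK : DiffCompat σk σK) (hKS : DiffCompat σK σS)
    (hRS : DiffCompat σR σS) {P : Submodule R S} (hP : ∀ x ∈ P, σS x ∈ P) {x : S} (hx0 : x ≠ 0)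
    (hx : x ∈ constantAdjoin R S σK) (hxP : x ∈ P) :
    ∃ u : K, u ≠ 0 ∧ σK u = u ∧ algebraMap K S u ∈ P := by
  obtain ⟨b, hbσ, hb, hspan⟩ := exists_linearIndependent_constantAdjoin R S σk σK
  obtain ⟨f, rfl⟩ := hspan x hx
  have hf : f ≠ 0 := fun h => hx0 (by rw [h, map_zero])
  obtain ⟨g, hg, hgσ, hgP⟩ := hσR.exists_constant_linearCombination_mem
    (τ := (σS : S →+ S)) hRS.map_smul (fun i => (hKS _).trans (by rw [hbσ])) hP hf hxP
  obtain ⟨u, huσ, hu0, hu⟩ := hR.exists_constant_eq_linearCombination (S := S) hkK hbσ hb hgσ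
  exact ⟨u, hu0 hg, huσ, hu ▸ hgP⟩

theorem IsSimpleDiff.exists_constant_eq_of_mem_constantAdjoin [Nontrivial S]
    (hσR : IsSimpleDiff σR) (hR : ConstantsMatch σk σR) (hkK : DiffCompat σk σK)
    (hKS : DiffCompat σK σS) (hRS : DiffCompat σR σS) {x : S}
    (hx : x ∈ constantAdjoin R S σK) (hxσ : σS x = x) :
    ∃ u : K, σK u = u ∧ algebraMap K S u = x := by
  obtain ⟨b, hbσ, hb, hspan⟩ := exists_linearIndependent_constantAdjoin R S σk σK
  obtain ⟨f, rfl⟩ := hspan x hx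
  have hfσ : f.mapRange σR (map_zero σR) = f :=
    hσR.linearIndependent_algebraMap_constants (S := S) hR hkK hKS hRS hbσ hb <|
      (linearCombination_mapRange (τ := (σS : S →+ S)) hRS.map_smul
        (fun i => (hKS _).trans (by rw [hbσ])) f).trans hxσ
  obtain ⟨u, huσ, -, hu⟩ := hR.exists_constant_eq_linearCombination (S := S) hkK hbσ hb
    (DFunLike.congr_fun hfσ)
  exact ⟨u, huσ, hu⟩

theorem exists_ne_zero_algebraMap_mul_mem_constantAdjoin
    (hK : IntermediateField.adjoin k {x : K | σK x = x} = ⊤)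
    (hS : Algebra.adjoin K (Set.range (algebraMap R S)) = ⊤) (s : S) :
    ∃ d : K, d ≠ 0 ∧ algebraMap K S d ∈ constantAdjoin R S σK ∧
      algebraMap K S d * s ∈ constantAdjoin R S σK := by
  have hs : s ∈ Algebra.adjoin K (Set.range (algebraMap R S)) := hS ▸ Algebra.mem_top
  induction hs using Algebra.adjoin_induction with
  | mem s hs =>
    obtain ⟨r, rfl⟩ := hs
    exact ⟨1, one_ne_zero, by simp only [map_one, one_mem],
      by simp only [map_one, one_mul, Subalgebra.algebraMap_mem]⟩
  | algebraMap a =>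
    obtain ⟨p, hp, d, hd, rfl⟩ := IntermediateField.mem_adjoin_iff_div.mp
      (hK ▸ IntermediateField.mem_top : a ∈ IntermediateField.adjoin k {x : K | σK x = x})
    by_cases hd0 : d = 0
    · exact ⟨1, one_ne_zero, by simp only [map_one, one_mem],
        by simp only [hd0, div_zero, map_zero, mul_zero, zero_mem]⟩
    · refine ⟨d, hd0, algebraMap_mem_adjoin_image hd, ?_⟩
      rw [← map_mul, mul_div_cancel₀ p hd0]
      exact algebraMap_mem_adjoin_image hp
  | add x y _ _ hx hy =>
    obtain ⟨d, hd, hdT, hdx⟩ := hx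
    obtain ⟨e, he, heT, hey⟩ := hy
    refine ⟨d * e, mul_ne_zero hd he, by rw [map_mul]; exact mul_mem hdT heT, ?_⟩
    have hsum : algebraMap K S (d * e) * (x + y) =
        algebraMap K S e * (algebraMap K S d * x) + algebraMap K S d * (algebraMap K S e * y) := by
      rw [map_mul]; ring
    rw [hsum]
    exact add_mem (mul_mem heT hdx) (mul_mem hdT hey)
  | mul x y _ _ hx hy =>
    obtain ⟨d, hd, hdT, hdx⟩ := hx
    obtain ⟨e, he, heT, hey⟩ := hy
    refine ⟨d * e, mul_ne_zero hd he, by rw [map_mul]; exact mul_mem hdT heT, ?_⟩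
    rw [map_mul, mul_mul_mul_comm]
    exact mul_mem hdx hey

theorem IsSimpleDiff.of_adjoin_constants (hσR : IsSimpleDiff σR) (hR : ConstantsMatch σk σR)
    (hkK : DiffCompat σk σK) (hKS : DiffCompat σK σS) (hRS : DiffCompat σR σS)
    (hK : IntermediateField.adjoin k {x : K | σK x = x} = ⊤)
    (hS : Algebra.adjoin K (Set.range (algebraMap R S)) = ⊤) : IsSimpleDiff σS := by
  intro I hI
  rw [or_iff_not_imp_left, ← ne_eq, Submodule.ne_bot_iff]
  rintro ⟨s, hsI, hs⟩
  obtain ⟨d, hd, -, hds⟩ := exists_ne_zero_algebraMap_mul_mem_constantAdjoin hK hS s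
  have hds0 : algebraMap K S d * s ≠ 0 :=
    (((IsUnit.mk0 d hd).map (algebraMap K S)).mul_right_eq_zero).not.mpr hs
  obtain ⟨u, hu, -, huI⟩ := hσR.exists_constant_mem_of_mem_constantAdjoin hR hkK hKS hRS
    (P := I.restrictScalars R) hI hds0 hds (I.mul_mem_left _ hsI)
  exact I.eq_top_of_isUnit_mem huI ((IsUnit.mk0 u hu).map (algebraMap K S))

theorem ConstantsMatch.of_adjoin_constants (hσR : IsSimpleDiff σR)
    (hR : ConstantsMatch σk σR) (hkK : DiffCompat σk σK) (hKS : DiffCompat σK σS)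
    (hRS : DiffCompat σR σS) (hK : IntermediateField.adjoin k {x : K | σK x = x} = ⊤)
    (hS : Algebra.adjoin K (Set.range (algebraMap R S)) = ⊤) : ConstantsMatch σK σS := by
  intro s hs
  rcases subsingleton_or_nontrivial S with _ | _
  · exact ⟨0, map_zero σK, Subsingleton.elim _ _⟩
  obtain ⟨d, hd, hdT, hds⟩ := exists_ne_zero_algebraMap_mul_mem_constantAdjoin hK hS s
  let P : Submodule R S :=
    (Subalgebra.toSubmodule (constantAdjoin R S σK)).comap (LinearMap.mulRight R s)
  have hP : ∀ x ∈ P, σS x ∈ P := fun x hx => by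
    have hσxs := map_mem_constantAdjoin hKS hRS hx
    rwa [LinearMap.mulRight_apply, map_mul, hs] at hσxs
  obtain ⟨u, hu, huσ, hus⟩ := hσR.exists_constant_mem_of_mem_constantAdjoin hR hkK hKS hRS hP
    ((map_ne_zero _).mpr hd) hdT hds
  obtain ⟨c, hcσ, hc⟩ := hσR.exists_constant_eq_of_mem_constantAdjoin hR hkK hKS hRS hus
    (by rw [LinearMap.mulRight_apply, map_mul, hKS, huσ, hs])
  refine ⟨c / u, by rw [map_div₀, hcσ, huσ],
    ((IsUnit.mk0 u hu).map (algebraMap K S)).mul_left_cancel ?_⟩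
  rw [← map_mul, mul_div_cancel₀ c hu, hc, LinearMap.mulRight_apply]

end ConstantAdjoin

section BaseChange

variable {n : ℕ}

theorem entries_map {R S : Type*} (f : R → S) (M : Matrix (Fin n) (Fin n) R) :
    entries (M.map f) = f '' entries M :=
  Set.range_comp f fun p : Fin n × Fin n => M p.1 p.2

theorem FundMatrix.map {k K R S : Type*} [CommRing k] [CommRing K] [CommRing R] [CommRing S]
    [Algebra k K] [Algebra k R] [Algebra k S] [Algebra K S] [Algebra R S] [IsScalarTower k K S]
    [IsScalarTower k R S] {σR : R ≃+* R} {σS : S ≃+* S} (hRS : DiffCompat σR σS)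
    {A : (Matrix (Fin n) (Fin n) k)ˣ} {Z : (Matrix (Fin n) (Fin n) R)ˣ} (hZ : FundMatrix σR A Z) :
    FundMatrix σS (Units.map (algebraMap k K).mapMatrix.toMonoidHom A)
      (Units.map (algebraMap R S).mapMatrix.toMonoidHom Z) := by
  have hZS := congrArg (algebraMap R S).mapMatrix hZ
  rw [map_mul] at hZS
  change (Z.val.map (algebraMap R S)).map σS =
    (A.val.map (algebraMap k K)).map (algebraMap K S) * Z.val.map (algebraMap R S)
  calc (Z.val.map (algebraMap R S)).map σS
      = (Z.val.map σR).map (algebraMap R S) := Matrix.ext fun i j => hRS (Z.val i j)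
    _ = (A.val.map (algebraMap k R)).map (algebraMap R S) * Z.val.map (algebraMap R S) := hZS
    _ = _ := by
      simp only [Matrix.map_map, ← RingHom.coe_comp, ← IsScalarTower.algebraMap_eq]

theorem IsPVRing.of_adjoin_constants {k K R S : Type*} [Field k] [Field K] [CommRing R]
    [CommRing S] [Algebra k K] [Algebra k R] [Algebra k S] [Algebra K S] [Algebra R S]
    [IsScalarTower k K S] [IsScalarTower k R S] {σk : k ≃+* k} {σK : K ≃+* K} {σR : R ≃+* R}
    {σS : S ≃+* S} {A : (Matrix (Fin n) (Fin n) k)ˣ} (hR : IsPVRing σk σR A)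
    (hRconst : ConstantsMatch σk σR) (hkK : DiffCompat σk σK) (hKS : DiffCompat σK σS)
    (hRS : DiffCompat σR σS) (hK : IntermediateField.adjoin k {x : K | σK x = x} = ⊤)
    (hS : Algebra.adjoin K (Set.range (algebraMap R S)) = ⊤) :
    IsPVRing σK σS (Units.map (algebraMap k K).mapMatrix.toMonoidHom A) := by
  obtain ⟨-, hσR, Z, hZ, hZgen⟩ := hR
  refine ⟨hKS, hσR.of_adjoin_constants hRconst hkK hKS hRS hK hS, _, hZ.map hRS, ?_⟩
  have himage := adjoin_image_eq_top hZgen hS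
  rwa [Set.image_union, ← entries_map, ← entries_map] at himage

end BaseChange

section GenRing

variable {k K : Type*} [CommRing k] [CommRing K] {n : ℕ}

theorem algebraMap_genRing_C (a : k) :
    algebraMap (MvPolynomial (Fin n × Fin n) k) (GenRing k n) (MvPolynomial.C a) =
      algebraMap k (GenRing k n) a :=
  (IsScalarTower.algebraMap_apply k (MvPolynomial (Fin n × Fin n) k) (GenRing k n) a).symm

theorem genRing_ringHom_ext {B : Type*} [CommSemiring B] {f g : GenRing k n →+* B}
    (hk : ∀ a, f (algebraMap k (GenRing k n) a) = g (algebraMap k (GenRing k n) a))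
    (hY : ∀ i j, f (Yent k n i j) = g (Yent k n i j)) : f = g := by
  refine IsLocalization.ringHom_ext (Submonoid.powers (genMat k n).det) ?_
  refine MvPolynomial.ringHom_ext (fun a => ?_) fun p => hY p.1 p.2
  simpa only [RingHom.comp_apply, algebraMap_genRing_C] using hk a

theorem isUnit_det_of_Yent : IsUnit (Matrix.of (Yent k n)).det := by
  have hY : Matrix.of (Yent k n) = (algebraMap _ (GenRing k n)).mapMatrix (genMat k n) := rfl
  rw [hY, ← RingHom.map_det]
  exact IsLocalization.Away.algebraMap_isUnit _

theorem exists_algHom_genRing {W : Type*} [CommRing W] [Algebra K W]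
    {Z : Matrix (Fin n) (Fin n) W} (hZ : IsUnit Z.det) :
    ∃ θ : GenRing K n →ₐ[K] W, ∀ i j, θ (Yent K n i j) = Z i j := by
  let θ₀ : MvPolynomial (Fin n × Fin n) K →ₐ[K] W := MvPolynomial.aeval fun p => Z p.1 p.2
  have hθ₀ : θ₀.mapMatrix (genMat K n) = Z := by
    ext i j
    exact MvPolynomial.aeval_X ..
  have hdet : IsUnit (θ₀ (genMat K n).det) := by rwa [AlgHom.map_det, hθ₀]
  refine ⟨IsLocalization.Away.liftAlgHom (genMat K n).det (f := θ₀) hdet, fun i j => ?_⟩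
  exact (IsLocalization.Away.lift_eq _ hdet _).trans (congrFun₂ hθ₀ i j)

theorem adjoin_range_eq_top_of_map_Yent {φ : GenRing k n →+* GenRing K n}
    (hφY : ∀ i j, φ (Yent k n i j) = Yent K n i j) : Algebra.adjoin K (Set.range φ) = ⊤ := by
  let B : Subalgebra K (GenRing K n) := Algebra.adjoin K (Set.range φ)
  let φB : GenRing k n →+* B :=
    φ.codRestrict B fun x => Algebra.subset_adjoin (Set.mem_range_self x)
  have hdet : IsUnit (φB.mapMatrix (Matrix.of (Yent k n))).det := by
    rw [← RingHom.map_det]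
    exact isUnit_det_of_Yent.map φB
  obtain ⟨θ, hθ⟩ := exists_algHom_genRing (K := K) hdet
  have hid : (B.val.comp θ : GenRing K n →+* GenRing K n) = RingHom.id _ :=
    genRing_ringHom_ext (fun a => (B.val.comp θ).commutes a) fun i j =>
      (congrArg B.val (hθ i j)).trans (hφY i j)
  refine eq_top_iff.mpr fun x _ => ?_
  have hx : (θ x : GenRing K n) = x := RingHom.congr_fun hid x
  exact hx ▸ (θ x).2

variable [Algebra k K] {φ : GenRing k n →+* GenRing K n}

theorem comp_eq_comp_of_map_Yent {σk : k ≃+* k} {σK : K ≃+* K} (hkK : DiffCompat σk σK)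
    {A : Matrix (Fin n) (Fin n) k} {σ₀ : GenRing k n ≃+* GenRing k n} (hσ₀ : DiffCompat σk σ₀)
    (hσ₀Y : ∀ i j, σ₀ (Yent k n i j) = ∑ l, algebraMap k (GenRing k n) (A i l) * Yent k n l j)
    {σ₁ : GenRing K n ≃+* GenRing K n} (hσ₁ : DiffCompat σK σ₁)
    (hσ₁Y : ∀ i j, σ₁ (Yent K n i j) =
      ∑ l, algebraMap K (GenRing K n) (algebraMap k K (A i l)) * Yent K n l j)
    (hφk : ∀ a, φ (algebraMap k (GenRing k n) a) = algebraMap K (GenRing K n) (algebraMap k K a))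
    (hφY : ∀ i j, φ (Yent k n i j) = Yent K n i j) :
    (σ₁ : GenRing K n →+* GenRing K n).comp φ = φ.comp (σ₀ : GenRing k n →+* GenRing k n) := by
  refine genRing_ringHom_ext (fun a => ?_) fun i j => ?_
  · simp only [RingHom.comp_apply, RingHom.coe_coe, hφk, hσ₁ _, hσ₀ _, hkK _]
  · simp only [RingHom.comp_apply, RingHom.coe_coe, hφY, hσ₁Y, hσ₀Y, map_sum, map_mul, hφk]

end GenRing

theorem adjoin_range_quotientMap_eq_top {A B K : Type*} [CommRing A] [CommRing B]
    [CommSemiring K] [Algebra K B] {φ : A →+* B} (hφ : Algebra.adjoin K (Set.range φ) = ⊤)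
    (q : Ideal A) :
    Algebra.adjoin K (Set.range (Ideal.quotientMap (q.map φ) φ Ideal.le_comap_map)) = ⊤ := by
  have hcomp : ⇑(Ideal.quotientMap (q.map φ) φ Ideal.le_comap_map) ∘ Ideal.Quotient.mk q =
      Ideal.Quotient.mkₐ K (q.map φ) ∘ φ := rfl
  rw [← Ideal.Quotient.mk_surjective.range_comp, hcomp, Set.range_comp, ← AlgHom.map_adjoin, hφ,
    Algebra.map_top, AlgHom.range_eq_top]
  exact Ideal.Quotient.mkₐ_surjective K _

theorem statement_1_general {k K : Type*} [Field k] [Field K] [Algebra k K] (σk : k ≃+* k)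
    (σK : K ≃+* K) (hkK : DiffCompat σk σK)
    (hKgen : IntermediateField.adjoin k {x : K | σK x = x} = ⊤)
    {n : ℕ} (A : (Matrix (Fin n) (Fin n) k)ˣ)
    (σ₀ : GenRing k n ≃+* GenRing k n) (hσ₀ : DiffCompat σk σ₀)
    (hσ₀Y : ∀ i j, σ₀ (Yent k n i j) =
      ∑ l, algebraMap k (GenRing k n) (A.val i l) * Yent k n l j)
    (σ₁ : GenRing K n ≃+* GenRing K n) (hσ₁ : DiffCompat σK σ₁)
    (hσ₁Y : ∀ i j, σ₁ (Yent K n i j) =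
      ∑ l, algebraMap K (GenRing K n) (algebraMap k K (A.val i l)) * Yent K n l j)
    (φ : GenRing k n →+* GenRing K n)
    (hφk : ∀ x : k, φ (algebraMap k (GenRing k n) x) =
      algebraMap K (GenRing K n) (algebraMap k K x))
    (hφY : ∀ i j, φ (Yent k n i j) = Yent K n i j) (q : Ideal (GenRing k n))
    (σR : (GenRing k n ⧸ q) ≃+* (GenRing k n ⧸ q))
    (hσR : ∀ x, σR (Ideal.Quotient.mk q x) = Ideal.Quotient.mk q (σ₀ x))
    (hRPV : IsPVRing σk σR A) (hRconst : ConstantsMatch σk σR)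
    (σS : (GenRing K n ⧸ Ideal.map φ q) ≃+* (GenRing K n ⧸ Ideal.map φ q))
    (hσS : ∀ x, σS (Ideal.Quotient.mk (Ideal.map φ q) x) =
      Ideal.Quotient.mk (Ideal.map φ q) (σ₁ x)) :
    IsPVRing σK σS (Units.map (algebraMap k K).mapMatrix.toMonoidHom A) ∧
      ConstantsMatch σK σS := by
  let φq := Ideal.quotientMap (q.map φ) φ Ideal.le_comap_map
  let _ : Algebra (GenRing k n ⧸ q) (GenRing K n ⧸ q.map φ) := φq.toAlgebra
  have hkS : ∀ a : k, algebraMap k (GenRing K n ⧸ q.map φ) a =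
      φq (algebraMap k (GenRing k n ⧸ q) a) := fun a => congrArg (Ideal.Quotient.mk (q.map φ))
    ((IsScalarTower.algebraMap_apply k K (GenRing K n) a).trans (hφk a).symm)
  have : IsScalarTower k (GenRing k n ⧸ q) (GenRing K n ⧸ q.map φ) := .of_algebraMap_eq hkS
  have hKS : DiffCompat σK σS := fun a =>
    (hσS _).trans (congrArg (Ideal.Quotient.mk _) (hσ₁ a))
  have hRS : DiffCompat σR σS := Ideal.Quotient.mk_surjective.forall.mpr fun x => by
    have hφσ := RingHom.congr_fun (comp_eq_comp_of_map_Yent hkK hσ₀ hσ₀Y hσ₁ hσ₁Y hφk hφY) x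
    rw [hσR]
    exact (hσS (φ x)).trans (congrArg (Ideal.Quotient.mk _) hφσ)
  have hS : Algebra.adjoin K (Set.range φq) = ⊤ :=
    adjoin_range_quotientMap_eq_top (adjoin_range_eq_top_of_map_Yent hφY) q
  exact ⟨hRPV.of_adjoin_constants hRconst hkK hKS hRS hKgen hS,
    .of_adjoin_constants hRPV.2.1 hRconst hkK hKS hRS hKgen hS⟩

/-- If `R = k[Y, 1/det Y]/q` is a Picard-Vessiot ring over `k` with
`C_R = C_k`, where `q` is a maximal σ-ideal, and `K = k(C_K)` is a difference field
extension, then `S = K[Y, 1/det Y]/(q·K[Y, 1/det Y])` is a Picard-Vessiot ring over `K`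
with `C_S = C_K`. -/
theorem statement_1 {k : Type} [Field k] [CharZero k] (σk : k ≃+* k)
    {K : Type} [Field K] [Algebra k K] (σK : K ≃+* K) (hkK : DiffCompat σk σK)
    (hKgen : IntermediateField.adjoin k {x : K | σK x = x} = ⊤)
    {n : ℕ} (A : (Matrix (Fin n) (Fin n) k)ˣ)
    -- σ on the generic ring k[Y, 1/det Y], with σ(Y) = AY
    (σ₀ : GenRing k n ≃+* GenRing k n) (hσ₀ : DiffCompat σk σ₀)
    (hσ₀Y : ∀ i j, σ₀ (Yent k n i j) =
      ∑ l, algebraMap k (GenRing k n) (A.val i l) * Yent k n l j)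
    -- σ on the generic ring K[Y, 1/det Y], with σ(Y) = AY
    (σ₁ : GenRing K n ≃+* GenRing K n) (hσ₁ : DiffCompat σK σ₁)
    (hσ₁Y : ∀ i j, σ₁ (Yent K n i j) =
      ∑ l, algebraMap K (GenRing K n) (algebraMap k K (A.val i l)) * Yent K n l j)
    -- the canonical map k[Y, 1/det Y] → K[Y, 1/det Y]
    (φ : GenRing k n →+* GenRing K n)
    (hφk : ∀ x : k, φ (algebraMap k (GenRing k n) x) =
      algebraMap K (GenRing K n) (algebraMap k K x))
    (hφY : ∀ i j, φ (Yent k n i j) = Yent K n i j)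
    -- q is a maximal σ-ideal of k[Y, 1/det Y]
    (q : Ideal (GenRing k n)) (hqσ : ∀ x ∈ q, σ₀ x ∈ q) (hqproper : q ≠ ⊤)
    (hqmax : ∀ q' : Ideal (GenRing k n), (∀ x ∈ q', σ₀ x ∈ q') → q ≤ q' → q' = ⊤ ∨ q' = q)
    -- R = k[Y, 1/det Y]/q, a Picard-Vessiot ring over k with C_R = C_k
    (σR : (GenRing k n ⧸ q) ≃+* (GenRing k n ⧸ q))
    (hσR : ∀ x, σR (Ideal.Quotient.mk q x) = Ideal.Quotient.mk q (σ₀ x))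
    (hRPV : IsPVRing σk σR A) (hRconst : ConstantsMatch σk σR)
    -- S = K[Y, 1/det Y]/(q·K[Y, 1/det Y])
    (σS : (GenRing K n ⧸ Ideal.map φ q) ≃+* (GenRing K n ⧸ Ideal.map φ q))
    (hσS : ∀ x, σS (Ideal.Quotient.mk (Ideal.map φ q) x) =
      Ideal.Quotient.mk (Ideal.map φ q) (σ₁ x)) :
    IsPVRing σK σS (Units.map (algebraMap k K).mapMatrix.toMonoidHom A) ∧
    ConstantsMatch σK σS := by
  exact statement_1_general σk σK hkK hKgen A σ₀ hσ₀ hσ₀Y σ₁ hσ₁ hσ₁Y φ hφk hφY q σR hσR hRPV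
    hRconst σS hσS

end PV
end
end

section
/- Let K be a difference field of characteristic zero with C_K = D_K, A ∈ GL_n(K), and let R' be a Picard-Vessiot ring for σ(X) = AX over K. Let R'' = K[V, 1/det(V)] be a difference ring extension of K generated over K by the entries of a matrix V ∈ GL_n(R'') with σ(V) = AV and by 1/det(V), and assume that R'' has no nonzero nilpotent elements and that the Krull dimension of R'' equals that of R'. Then R'' is a finite direct sum of Picard-Vessiot rings for σ(X) = AX over K: there exist finitely many pairwise comaximal σ-ideals I_1, …, I_r of R'' with I_1 ∩ ⋯ ∩ I_r = (0) such that R'' ≅ ⊕_{j=1}^r R''/I_j as difference rings and each R''/I_j is a Picard-Vessiot ring for σ(X) = AX over K. -/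
open scoped TensorProduct

noncomputable section

namespace PV

set_option synthInstance.maxHeartbeats 1000000

/-! Let `R₁`, `R₂` be nonzero Picard-Vessiot rings with fundamental matrices `Z₁`, `Z₂`. In
`T = R₁ ⊗ R₂` the matrix `Z₁⁻¹ Z₂` has constant entries and generates `T` over `R₁`; since `R₁` is
simple, constants of `T` that are linearly independent over `C_{R₁}` stay independent over `R₁`, so
`T = R₁ ⊗ C_T` over the field `C_{R₁}` and `dim T = dim R₁ + dim C_T`. Exchanging the factors gives
`dim R₁ = dim R₂`: all Picard-Vessiot rings have the same dimension.

The quotient of `R''` by a maximal σ-ideal is a Picard-Vessiot ring, hence has the full dimension of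
`R''`, so every maximal σ-ideal lies in a minimal prime. It is then the largest σ-ideal in that
prime, so there are only finitely many of them. As σ permutes the minimal primes, each minimal prime
contains a maximal σ-ideal, whence the maximal σ-ideals intersect in the nilradical `0`. They are
pairwise comaximal, and the Chinese remainder theorem gives the decomposition.
-/

theorem ringKrullDim_eq_of_isIntegral {R S : Type*} [CommRing R] [CommRing S] {f : R →+* S}
    (hf : Function.Injective f) (hint : f.IsIntegral) : ringKrullDim S = ringKrullDim R := by
  algebraize [f]
  refine le_antisymm ?_ (iSup_le fun l ↦ ?_)
  · refine Order.krullDim_le_of_strictMono (PrimeSpectrum.comap f) fun P Q h ↦ ?_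
    exact Ideal.IsIntegral.comap_lt_comap (R := R) (I := P.asIdeal) (J := Q.asIdeal) h
  · have hker : (⊥ : Ideal S).comap (algebraMap R S) ≤ (RelSeries.head l).asIdeal :=
      ((RingHom.injective_iff_ker_eq_bot f).1 hf).trans_le bot_le
    obtain ⟨Q, _, _, hQ⟩ := Ideal.exists_ideal_over_prime_of_isIntegral _ _ hker
    have : Q.LiesOver (RelSeries.head l).asIdeal := ⟨hQ.symm⟩
    obtain ⟨L, hL, -⟩ := Ideal.exists_ltSeries_of_hasGoingUp l Q
    exact hL ▸ Order.LTSeries.length_le_krullDim L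

theorem isIntegral_tensorProduct_map_id {C R A B : Type*} [CommRing C] [CommRing R] [CommRing A]
    [CommRing B] [Algebra C R] [Algebra C A] [Algebra C B] {g : A →ₐ[C] B} (hg : g.IsIntegral) :
    (Algebra.TensorProduct.map (AlgHom.id R R) g).IsIntegral := by
  intro x
  induction x with
  | zero => exact RingHom.isIntegralElem_zero _
  | tmul r b =>
    have hr : (Algebra.TensorProduct.map (AlgHom.id R R) g).toRingHom.IsIntegralElem (r ⊗ₜ 1) := by
      simpa using! (Algebra.TensorProduct.map (AlgHom.id R R) g).toRingHom.isIntegralElem_map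
        (x := r ⊗ₜ 1)
    have hb : (Algebra.TensorProduct.map (AlgHom.id R R) g).toRingHom.IsIntegralElem (1 ⊗ₜ b) := by
      refine .of_comp (f := Algebra.TensorProduct.includeRight.toRingHom) ?_
      convert! (hg b).map (Algebra.TensorProduct.includeRight : B →ₐ[C] R ⊗[C] B).toRingHom
    simpa using hr.mul _ hb
  | add x y hx hy => exact hx.add _ hy

theorem exists_ringKrullDim_eq_natCast (k : Type*) {B : Type*} [Field k] [CommRing B] [Algebra k B]
    [Algebra.FiniteType k B] [Nontrivial B] : ∃ d : ℕ, ringKrullDim B = d := by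
  obtain ⟨d, g, hg, hint⟩ := exists_integral_inj_algHom_of_fg k B
  exact ⟨d, by simp [ringKrullDim_eq_of_isIntegral (f := g.toRingHom) hg hint]⟩

theorem ringKrullDim_tensorProduct (k : Type*) {R B : Type*} [Field k] [CommRing R] [CommRing B]
    [Algebra k R] [Algebra k B] [IsNoetherianRing R] [Algebra.FiniteType k B] :
    ringKrullDim (R ⊗[k] B) = ringKrullDim R + ringKrullDim B := by
  nontriviality B
  obtain ⟨d, g, hg, hint⟩ := exists_integral_inj_algHom_of_fg k B
  have hinj : Function.Injective (Algebra.TensorProduct.map (AlgHom.id R R) g).toRingHom :=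
    Module.Flat.lTensor_preserves_injective_linearMap g.toLinearMap hg
  calc ringKrullDim (R ⊗[k] B)
      = ringKrullDim (R ⊗[k] MvPolynomial (Fin d) k) :=
        ringKrullDim_eq_of_isIntegral hinj (isIntegral_tensorProduct_map_id hint)
    _ = ringKrullDim (MvPolynomial (Fin d) R) :=
        ringKrullDim_eq_of_ringEquiv (MvPolynomial.algebraTensorAlgEquiv k R).toRingEquiv
    _ = ringKrullDim R + ringKrullDim (MvPolynomial (Fin d) k) := by simp
    _ = ringKrullDim R + ringKrullDim B := by
        rw [ringKrullDim_eq_of_isIntegral (f := g.toRingHom) hg hint]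

theorem exists_mem_minimalPrimes_of_ringKrullDim_le {R : Type*} [CommRing R] {I : Ideal R} {d : ℕ}
    (hR : ringKrullDim R = d) (hI : ringKrullDim R ≤ ringKrullDim (R ⧸ I)) :
    ∃ P ∈ minimalPrimes R, I ≤ P := by
  rw [ringKrullDim_quotient, hR] at hI
  obtain ⟨l, hl⟩ := Order.le_krullDim_iff.1 hI
  refine ⟨l.head.1.asIdeal, ⟨⟨l.head.1.isPrime, bot_le⟩, fun Q ⟨hQ, _⟩ hle ↦ ?_⟩, l.head.2⟩
  by_contra hnle
  have hlt : (⟨Q, hQ⟩ : PrimeSpectrum R) < l.head.1 := lt_of_le_not_ge hle hnle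
  let L : LTSeries (PrimeSpectrum R) := (l.map Subtype.val fun _ _ h ↦ h).cons ⟨Q, hQ⟩ hlt
  have hL : (L.length : WithBot ℕ∞) ≤ d := hR.symm.ge.trans' (Order.LTSeries.length_le_krullDim L)
  have hLl : L.length = l.length + 1 := RelSeries.cons_length ..
  have : L.length ≤ d := by exact_mod_cast hL
  omega

theorem bijective_quotientMk_pi {R ι : Type*} [CommRing R] [Finite ι] {I : ι → Ideal R}
    (hI : Pairwise fun i j ↦ I i ⊔ I j = ⊤) (hbot : ⨅ i, I i = ⊥) :
    Function.Bijective fun (x : R) (i : ι) ↦ Ideal.Quotient.mk (I i) x := by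
  refine ⟨fun x y hxy ↦ ?_, fun y ↦ ?_⟩
  · have hmem : x - y ∈ ⨅ i, I i :=
      (Submodule.mem_iInf _).2 fun i ↦ Ideal.Quotient.eq.1 (congrFun hxy i)
    rwa [hbot, Ideal.mem_bot, sub_eq_zero] at hmem
  · obtain ⟨x, hx⟩ := Ideal.pi_quotient_surjective
      (fun i j hij ↦ Ideal.isCoprime_iff_sup_eq.2 (hI hij)) y
    exact ⟨x, funext hx⟩

theorem isBaseChange_of_basis {R S M N ι : Type*} [CommRing R] [CommRing S] [Algebra R S]
    [AddCommGroup M] [Module R M] [AddCommGroup N] [Module R N] [Module S N] [IsScalarTower R S N]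
    {f : M →ₗ[R] N} (b : Module.Basis ι R M) (b' : Module.Basis ι S N) (h : ∀ i, b' i = f (b i)) :
    IsBaseChange S f := by
  let e : S ⊗[R] M ≃ₗ[S] N := (b.baseChange S).equiv b' (Equiv.refl ι)
  have he : e.toLinearMap.restrictScalars R ∘ₗ TensorProduct.mk R S M 1 = f :=
    b.ext fun i ↦ by simpa [e, ← h] using (b.baseChange S).equiv_apply i b' (Equiv.refl ι)
  exact .of_equiv e fun x ↦ LinearMap.congr_fun he x

theorem span_adjoin_eq_top {R C T : Type*} [CommRing R] [CommRing C] [CommRing T] [Algebra R T]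
    [Algebra C T] {s : Set T} (hs : Algebra.adjoin R s = ⊤) :
    Submodule.span R (Algebra.adjoin C s : Set T) = ⊤ := by
  rw [← top_le_iff, ← Algebra.top_toSubmodule, ← hs, Algebra.adjoin_eq_span]
  exact Submodule.span_mono (Submonoid.closure_le (S := (Algebra.adjoin C s).toSubmonoid).2
    Algebra.subset_adjoin)

section Constants

variable {R T : Type*} [CommRing R] [CommRing T] [Algebra R T] {σ : R ≃+* R} {τ : T ≃+* T}

theorem mem_constants {x : R} : x ∈ constants σ ↔ σ x = x := Iff.rfl

theorem IsSimpleDiff.isField_constants [Nontrivial R] (hσ : IsSimpleDiff σ) :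
    IsField (constants σ) := by
  refine ⟨⟨0, 1, zero_ne_one⟩, mul_comm, fun {a} ha ↦ ?_⟩
  have hspan : ∀ x ∈ Ideal.span {(a : R)}, σ x ∈ Ideal.span {(a : R)} := fun x hx ↦ by
    obtain ⟨y, rfl⟩ := Ideal.mem_span_singleton'.1 hx
    rw [map_mul, mem_constants.1 a.2]
    exact Ideal.mem_span_singleton'.2 ⟨_, rfl⟩
  have htop : Ideal.span {(a : R)} = ⊤ := (hσ _ hspan).resolve_left (by simpa using ha)
  obtain ⟨b, hb⟩ := (Ideal.span_singleton_eq_top.1 htop).exists_right_inv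
  have hσb : a * σ b = 1 := by
    rw [← mem_constants.1 a.2, ← map_mul, hb, map_one]
  have hb' : σ b = b := by
    calc σ b = a * b * σ b := by rw [hb, one_mul]
      _ = a * σ b * b := by ring
      _ = b := by rw [hσb, one_mul]
  exact ⟨⟨b, hb'⟩, Subtype.ext hb⟩

theorem IsSimpleDiff.exists_mem_forall_mem_constants {ι : Type*} (hσ : IsSimpleDiff σ)
    {N : Submodule R (ι →₀ R)} (hN : N ≠ ⊥)
    (hNσ : ∀ f ∈ N, f.mapRange σ (map_zero σ) ∈ N) :
    ∃ f ∈ N, f ≠ 0 ∧ ∀ i, f i ∈ constants σ := by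
  classical
  -- By simplicity some `g ∈ N` of minimal support has a coordinate equal to `1`; then `σ g - g` has
  -- smaller support and vanishes.
  obtain ⟨f, ⟨hf, hf0⟩, hmin⟩ := exists_minimalFor_of_wellFoundedLT
    (fun f : ι →₀ R ↦ f ∈ N ∧ f ≠ 0) Finsupp.support (N.exists_mem_ne_zero_of_ne_bot hN)
  have eq_zero {g : ι →₀ R} (hg : g ∈ N) (hgf : g.support ⊂ f.support) : g = 0 := by
    by_contra h0
    exact hgf.2 (hmin ⟨hg, h0⟩ hgf.1)
  obtain ⟨a, ha⟩ := Finsupp.support_nonempty_iff.2 hf0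
  let J : Ideal R := (N ⊓ Finsupp.supported R R f.support).map (Finsupp.lapply a)
  have hJσ : ∀ x ∈ J, σ x ∈ J := by
    rintro _ ⟨g, ⟨hg, hgf⟩, rfl⟩
    refine ⟨_, ⟨hNσ g hg, ?_⟩, rfl⟩
    exact (Finset.coe_subset.2 Finsupp.support_mapRange).trans hgf
  have hJ : J = ⊤ := (hσ J hJσ).resolve_left fun h ↦ Finsupp.mem_support_iff.1 ha <|
    (Submodule.eq_bot_iff J).1 h _ ⟨f, ⟨hf, Finset.Subset.rfl⟩, rfl⟩
  obtain ⟨g, ⟨hg, hgf⟩, hga : g a = 1⟩ : (1 : R) ∈ J := hJ ▸ Submodule.mem_top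
  have hσg : g.mapRange σ (map_zero σ) - g = 0 := by
    refine eq_zero (N.sub_mem (hNσ g hg) hg) (Finset.ssubset_iff_of_subset ?_ |>.2 ⟨a, ha, ?_⟩)
    · exact Finsupp.support_sub.trans (Finset.union_subset
        (Finsupp.support_mapRange.trans (Finset.coe_subset.1 hgf)) (Finset.coe_subset.1 hgf))
    · simp [hga]
  refine ⟨g, hg, fun h0 ↦ ?_, fun i ↦ ?_⟩
  · have : Subsingleton R := subsingleton_of_zero_eq_one (by simpa [h0] using hga)
    exact hf0 (Subsingleton.elim _ _)
  · exact sub_eq_zero.1 (DFunLike.congr_fun hσg i)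

theorem DiffCompat.map_linearCombination {ι : Type*} (hτ : DiffCompat σ τ) {v : ι → T}
    (hv : ∀ i, v i ∈ constants τ) (f : ι →₀ R) :
    τ (Finsupp.linearCombination R v f) =
      Finsupp.linearCombination R v (f.mapRange σ (map_zero σ)) := by
  rw [Finsupp.linearCombination_apply, Finsupp.linearCombination_apply,
    Finsupp.sum_mapRange_index (h := fun i r ↦ r • v i) fun _ ↦ zero_smul .., map_finsuppSum]
  simp only [Algebra.smul_def, map_mul, hτ _, mem_constants.1 (hv _)]

theorem IsSimpleDiff.linearIndependent_of_constants {ι : Type*} (hσ : IsSimpleDiff σ)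
    (hτ : DiffCompat σ τ) {v : ι → T} (hv : ∀ i, v i ∈ constants τ)
    (hli : LinearIndependent (constants σ) v) : LinearIndependent R v := by
  by_contra hR
  obtain ⟨f, hf, hf0, hfc⟩ := hσ.exists_mem_forall_mem_constants
    (mt LinearMap.ker_eq_bot.1 hR) fun f hf ↦ by
      rw [LinearMap.mem_ker, ← hτ.map_linearCombination hv, LinearMap.mem_ker.1 hf, map_zero]
  refine hf0 (Finsupp.ext fun i ↦ of_not_not fun hi ↦ hi ?_)
  exact congrArg Subtype.val <| linearIndependent_iff'.1 hli f.support (fun i ↦ ⟨f i, hfc i⟩)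
    hf i (Finsupp.mem_support_iff.2 hi)

variable {B : Subalgebra (constants σ) T}

theorem IsSimpleDiff.exists_basis_of_constants {ι : Type*} (hσ : IsSimpleDiff σ)
    (hτ : DiffCompat σ τ) (hB : B.toSubring ≤ constants τ)
    (hspan : Submodule.span R (B : Set T) = ⊤) (b : Module.Basis ι (constants σ) B) :
    ∃ b' : Module.Basis ι R T, ∀ i, b' i = b i := by
  have hli : LinearIndependent (constants σ) fun i ↦ (b i : T) :=
    b.linearIndependent.map' B.val.toLinearMap (LinearMap.ker_eq_bot.2 Subtype.val_injective)
  have hBspan : (B : Set T) ⊆ Submodule.span R (Set.range fun i ↦ (b i : T)) := fun x hx ↦ by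
    have hx' := Submodule.mem_map_of_mem (f := B.val.toLinearMap) (b.mem_span ⟨x, hx⟩)
    rw [Submodule.map_span, ← Set.range_comp] at hx'
    exact Submodule.span_le_restrictScalars (constants σ) R _ hx'
  refine ⟨.mk (hσ.linearIndependent_of_constants hτ (fun i ↦ hB (b i).2) hli) ?_,
    Module.Basis.mk_apply _ _⟩
  exact hspan.ge.trans (Submodule.span_le.2 hBspan)

variable [Module.Free (constants σ) B]

theorem IsSimpleDiff.toSubring_eq_constants (hσ : IsSimpleDiff σ)
    (hτ : DiffCompat σ τ) (hB : B.toSubring ≤ constants τ)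
    (hspan : Submodule.span R (B : Set T) = ⊤) : B.toSubring = constants τ := by
  refine le_antisymm hB fun x hx ↦ ?_
  obtain ⟨b, hb⟩ := hσ.exists_basis_of_constants hτ hB hspan (Module.Free.chooseBasis _ B)
  have hfix : (b.repr x).mapRange σ (map_zero σ) = b.repr x := by
    apply b.repr.symm.injective
    simp only [Module.Basis.repr_symm_apply]
    rw [← hτ.map_linearCombination fun i ↦ hb i ▸ hB (Subtype.prop _), b.linearCombination_repr, hx]
  rw [← b.linearCombination_repr x, Finsupp.linearCombination_apply]
  refine sum_mem fun i _ ↦ ?_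
  simp only [hb]
  exact B.smul_mem (Subtype.prop _) (⟨b.repr x i, DFunLike.congr_fun hfix i⟩ : constants σ)

theorem IsSimpleDiff.isPushout_of_constants (hσ : IsSimpleDiff σ)
    (hτ : DiffCompat σ τ) (hB : B.toSubring ≤ constants τ)
    (hspan : Submodule.span R (B : Set T) = ⊤) : Algebra.IsPushout (constants σ) R B T := by
  obtain ⟨b, hb⟩ := hσ.exists_basis_of_constants hτ hB hspan (Module.Free.chooseBasis _ B)
  exact ⟨isBaseChange_of_basis _ b hb⟩

theorem DiffCompat.adjoin_toSubring_le_constants (hτ : DiffCompat σ τ) {s : Set T}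
    (hs : s ⊆ constants τ) : (Algebra.adjoin (constants σ) s).toSubring ≤ constants τ := by
  rw [Algebra.adjoin_eq_ring_closure, Subring.closure_le, Set.union_subset_iff]
  refine ⟨?_, hs⟩
  rintro _ ⟨c, rfl⟩
  exact (hτ c).trans (congrArg (algebraMap R T) c.2)

theorem IsSimpleDiff.exists_ringKrullDim_eq_add [Nontrivial R] [Nontrivial T] [IsNoetherianRing R]
    (hσ : IsSimpleDiff σ) (hτ : DiffCompat σ τ) {s : Set T} (hs : s.Finite)
    (hsc : s ⊆ constants τ) (hgen : Algebra.adjoin R s = ⊤) :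
    ∃ d : ℕ, ringKrullDim (constants τ) = d ∧ ringKrullDim T = ringKrullDim R + d := by
  let _ : Field (constants σ) := hσ.isField_constants.toField
  let B : Subalgebra (constants σ) T := Algebra.adjoin (constants σ) s
  have hB : B.toSubring ≤ constants τ := hτ.adjoin_toSubring_le_constants hsc
  have hspan : Submodule.span R (B : Set T) = ⊤ := span_adjoin_eq_top hgen
  have : Module.Free (constants σ) B := Module.Free.of_divisionRing _ _
  have : Algebra.FiniteType (constants σ) B :=
    B.fg_iff_finiteType.1 (Subalgebra.fg_def.2 ⟨s, hs, rfl⟩)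
  have : Algebra.IsPushout (constants σ) R B T := hσ.isPushout_of_constants hτ hB hspan
  obtain ⟨d, hd⟩ := exists_ringKrullDim_eq_natCast (constants σ) (B := B)
  refine ⟨d, ?_, ?_⟩
  · rwa [← hσ.toSubring_eq_constants hτ hB hspan]
  · rw [← hd, ← ringKrullDim_tensorProduct (constants σ)]
    exact ringKrullDim_eq_of_ringEquiv
      (Algebra.IsPushout.equiv (constants σ) R B T).symm.toRingEquiv

end Constants

theorem entries_subset_iff {α : Type*} {n : ℕ} {M : Matrix (Fin n) (Fin n) α} {s : Set α} :
    entries M ⊆ s ↔ ∀ i j, M i j ∈ s := by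
  simp [entries, Set.range_subset_iff]

section SolutionAlgebra

open Matrix MatrixGroups

variable {K R T : Type*} [CommRing K] [CommRing R] [CommRing T] [Algebra K R] [Algebra K T]
  {n : ℕ}

/-- The subalgebra `K[Z, 1 / det Z]`, generated by the entries of `Z` and of `Z⁻¹` instead of
`1 / det Z`. -/
def solutionAlgebra (K : Type*) {R : Type*} [CommRing K] [CommRing R] [Algebra K R] {n : ℕ}
    (Z : GL (Fin n) R) : Subalgebra K R :=
  Algebra.adjoin K (entries Z.val ∪ entries (↑Z⁻¹ : Matrix (Fin n) (Fin n) R))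

theorem solutionAlgebra_le_iff {Z : GL (Fin n) R} {S : Subalgebra K R} :
    solutionAlgebra K Z ≤ S ↔ (∀ i j, Z.val i j ∈ S) ∧ ∀ i j, Z⁻¹.val i j ∈ S := by
  rw [solutionAlgebra, Algebra.adjoin_le_iff, Set.union_subset_iff, entries_subset_iff,
    entries_subset_iff]
  rfl

theorem solutionAlgebra_mul_le {Z W : GL (Fin n) R} {S : Subalgebra K R}
    (hZ : solutionAlgebra K Z ≤ S) (hW : solutionAlgebra K W ≤ S) :
    solutionAlgebra K (Z * W) ≤ S := by
  rw [solutionAlgebra_le_iff] at hZ hW ⊢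
  simp only [_root_.mul_inv_rev, Units.val_mul, Matrix.mul_apply]
  exact ⟨fun i j ↦ sum_mem fun l _ ↦ mul_mem (hZ.1 i l) (hW.1 l j),
    fun i j ↦ sum_mem fun l _ ↦ mul_mem (hW.2 i l) (hZ.2 l j)⟩

theorem map_solutionAlgebra (f : R →ₐ[K] T) (Z : GL (Fin n) R) :
    (solutionAlgebra K Z).map f = solutionAlgebra K (GeneralLinearGroup.map (f : R →+* T) Z) := by
  rw [solutionAlgebra, AlgHom.map_adjoin, Set.image_union, entries, entries, ← Set.range_comp,
    ← Set.range_comp]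
  rfl

theorem finite_entries_union (Z : GL (Fin n) R) :
    (entries Z.val ∪ entries (↑Z⁻¹ : Matrix (Fin n) (Fin n) R)).Finite :=
  (Set.finite_range _).union (Set.finite_range _)

theorem finiteType_of_solutionAlgebra_eq_top {Z : GL (Fin n) R}
    (hZ : solutionAlgebra K Z = ⊤) : Algebra.FiniteType K R :=
  ⟨Subalgebra.fg_def.2 ⟨_, finite_entries_union Z, hZ⟩⟩

theorem eq_top_of_isPushout {R₁ R₂ : Type*} [CommRing R₁] [CommRing R₂] [Algebra K R₁]
    [Algebra K R₂] [Algebra R₁ T] [Algebra R₂ T] [IsScalarTower K R₁ T] [IsScalarTower K R₂ T]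
    [h : Algebra.IsPushout K R₁ R₂ T] {S : Subalgebra R₁ T}
    (hS : ∀ x : R₂, algebraMap R₂ T x ∈ S) : S = ⊤ := by
  refine eq_top_iff.2 fun x _ ↦ h.out.inductionOn x (· ∈ S) S.zero_mem hS
    (fun r _ ↦ (S.smul_mem · r)) fun _ _ ↦ add_mem

end SolutionAlgebra

section FundMatrix

open Matrix MatrixGroups

variable {K R T : Type*} [CommRing K] [CommRing R] [CommRing T] [Algebra K R] [Algebra K T]
  [Algebra R T] [IsScalarTower K R T] {n : ℕ} {σ : R ≃+* R} {τ : T ≃+* T}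
  {A : GL (Fin n) K}

theorem fundMatrix_iff {Z : GL (Fin n) R} :
    FundMatrix σ A Z ↔ GeneralLinearGroup.map (σ : R →+* R) Z =
      GeneralLinearGroup.map (algebraMap K R) A * Z :=
  ⟨fun h ↦ Units.ext h, congrArg Units.val⟩

theorem FundMatrix.map_algebraMap {Z : GL (Fin n) R} (hZ : FundMatrix σ A Z)
    (hτ : DiffCompat σ τ) : FundMatrix τ A (GeneralLinearGroup.map (algebraMap R T) Z) := by
  ext i j
  have h := congr(algebraMap R T ($hZ i j))
  simp only [Matrix.map_apply, Matrix.mul_apply, map_sum, map_mul] at h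
  simpa [Matrix.mul_apply, hτ _, IsScalarTower.algebraMap_apply K R T] using h

theorem FundMatrix.map_inv_mul {Z W : GL (Fin n) R} (hZ : FundMatrix σ A Z)
    (hW : FundMatrix σ A W) : GeneralLinearGroup.map (σ : R →+* R) (Z⁻¹ * W) = Z⁻¹ * W := by
  rw [map_mul, map_inv, fundMatrix_iff.1 hZ, fundMatrix_iff.1 hW]
  group

theorem entries_union_subset_constants {U : GL (Fin n) R}
    (hU : GeneralLinearGroup.map (σ : R →+* R) U = U) :
    entries U.val ∪ entries (↑U⁻¹ : Matrix (Fin n) (Fin n) R) ⊆ constants σ := by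
  have hU' : GeneralLinearGroup.map (σ : R →+* R) U⁻¹ = U⁻¹ := by rw [map_inv, hU]
  exact Set.union_subset (entries_subset_iff.2 fun i j ↦ congr($(hU).val i j))
    (entries_subset_iff.2 fun i j ↦ congr($(hU').val i j))

theorem solutionAlgebra_inv_mul_eq_top {R₁ R₂ : Type*} [CommRing R₁] [CommRing R₂]
    [Algebra K R₁] [Algebra K R₂] [Algebra R₁ T] [Algebra R₂ T] [IsScalarTower K R₁ T]
    [IsScalarTower K R₂ T] [Algebra.IsPushout K R₁ R₂ T] (Z₁ : GL (Fin n) R₁)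
    {Z₂ : GL (Fin n) R₂} (hZ₂ : solutionAlgebra K Z₂ = ⊤) :
    solutionAlgebra R₁ ((GeneralLinearGroup.map (algebraMap R₁ T) Z₁)⁻¹ *
      GeneralLinearGroup.map (algebraMap R₂ T) Z₂) = ⊤ := by
  set W := (GeneralLinearGroup.map (algebraMap R₁ T) Z₁)⁻¹ *
    GeneralLinearGroup.map (algebraMap R₂ T) Z₂ with hW
  have hZ₁ : solutionAlgebra K (GeneralLinearGroup.map (algebraMap R₁ T) Z₁) ≤
      (solutionAlgebra R₁ W).restrictScalars K :=
    solutionAlgebra_le_iff.2 ⟨fun i j ↦ Subalgebra.algebraMap_mem _ (Z₁.val i j),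
      fun i j ↦ Subalgebra.algebraMap_mem _ (Z₁⁻¹.val i j)⟩
  have hWle : solutionAlgebra K W ≤ (solutionAlgebra R₁ W).restrictScalars K :=
    Algebra.adjoin_le Algebra.subset_adjoin
  have hle : solutionAlgebra K (GeneralLinearGroup.map (algebraMap R₂ T) Z₂) ≤
      (solutionAlgebra R₁ W).restrictScalars K := by
    simpa [hW] using solutionAlgebra_mul_le hZ₁ hWle
  refine eq_top_of_isPushout (K := K) (R₂ := R₂) fun x ↦ hle ?_
  rw [← IsScalarTower.coe_toAlgHom K R₂ T, ← map_solutionAlgebra, hZ₂]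
  exact ⟨x, trivial, rfl⟩

theorem IsSimpleDiff.exists_ringKrullDim_isPushout_eq_add {R₁ R₂ : Type*} [CommRing R₁]
    [CommRing R₂] [Algebra K R₁] [Algebra K R₂] [Algebra R₁ T] [Algebra R₂ T]
    [IsScalarTower K R₁ T] [IsScalarTower K R₂ T] [Algebra.IsPushout K R₁ R₂ T]
    [Nontrivial R₁] [Nontrivial T] [IsNoetherianRing R₁] {σ₁ : R₁ ≃+* R₁} {σ₂ : R₂ ≃+* R₂}
    (hσ₁ : IsSimpleDiff σ₁) (hτ₁ : DiffCompat σ₁ τ) (hτ₂ : DiffCompat σ₂ τ)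
    {Z₁ : GL (Fin n) R₁} (hZ₁ : FundMatrix σ₁ A Z₁)
    {Z₂ : GL (Fin n) R₂} (hZ₂ : FundMatrix σ₂ A Z₂)
    (hgen : solutionAlgebra K Z₂ = ⊤) :
    ∃ d : ℕ, ringKrullDim (constants τ) = d ∧ ringKrullDim T = ringKrullDim R₁ + d :=
  hσ₁.exists_ringKrullDim_eq_add hτ₁ (finite_entries_union _)
    (entries_union_subset_constants
      ((hZ₁.map_algebraMap hτ₁).map_inv_mul (hZ₂.map_algebraMap hτ₂)))
    (solutionAlgebra_inv_mul_eq_top Z₁ hgen)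

theorem DiffCompat.symm (h : DiffCompat σ τ) : DiffCompat σ.symm τ.symm := fun x ↦ by
  rw [RingEquiv.symm_apply_eq, h, RingEquiv.apply_symm_apply]

theorem exists_ringEquiv_tensorProduct {R₁ R₂ : Type*} [CommRing R₁] [CommRing R₂] [Algebra K R₁]
    [Algebra K R₂] {σK : K ≃+* K} {σ₁ : R₁ ≃+* R₁} {σ₂ : R₂ ≃+* R₂} (h₁ : DiffCompat σK σ₁)
    (h₂ : DiffCompat σK σ₂) :
    ∃ τ : R₁ ⊗[K] R₂ ≃+* R₁ ⊗[K] R₂, ∀ x y, τ (x ⊗ₜ y) = σ₁ x ⊗ₜ σ₂ y := by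
  have comm₁ : (σ₁ : R₁ →+* R₁).comp (algebraMap K R₁) = (algebraMap K R₁).comp σK := RingHom.ext h₁
  have comm₂ : (σ₂ : R₂ →+* R₂).comp (algebraMap K R₂) = (algebraMap K R₂).comp σK := RingHom.ext h₂
  let f := Algebra.TensorProduct.mapRingHom (σK : K →+* K) (σ₁ : R₁ →+* R₁) (σ₂ : R₂ →+* R₂)
    comm₁ comm₂
  let g := Algebra.TensorProduct.mapRingHom (σK.symm : K →+* K) (σ₁.symm : R₁ →+* R₁)
    (σ₂.symm : R₂ →+* R₂) (RingHom.ext h₁.symm) (RingHom.ext h₂.symm)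
  refine ⟨RingEquiv.ofRingHom f g ?_ ?_, fun x y ↦
    Algebra.TensorProduct.mapRingHom_tmul _ _ _ comm₁ comm₂ x y⟩ <;> ext x <;> simp [f, g]

end FundMatrix

theorem IsPVRing.ringKrullDim_eq {K R₁ R₂ : Type*} [Field K] [CommRing R₁] [CommRing R₂]
    [Algebra K R₁] [Algebra K R₂] [Nontrivial R₁] [Nontrivial R₂] {n : ℕ} {σK : K ≃+* K}
    {σ₁ : R₁ ≃+* R₁} {σ₂ : R₂ ≃+* R₂} {A : (Matrix (Fin n) (Fin n) K)ˣ}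
    (h₁ : IsPVRing σK σ₁ A) (h₂ : IsPVRing σK σ₂ A) : ringKrullDim R₁ = ringKrullDim R₂ := by
  obtain ⟨hc₁, hs₁, Z₁, hZ₁, hgen₁⟩ := h₁
  obtain ⟨hc₂, hs₂, Z₂, hZ₂, hgen₂⟩ := h₂
  have : Algebra.FiniteType K R₁ := finiteType_of_solutionAlgebra_eq_top hgen₁
  have : Algebra.FiniteType K R₂ := finiteType_of_solutionAlgebra_eq_top hgen₂
  have : IsNoetherianRing R₁ := Algebra.FiniteType.isNoetherianRing K R₁
  have : IsNoetherianRing R₂ := Algebra.FiniteType.isNoetherianRing K R₂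
  let _ : Algebra R₂ (R₁ ⊗[K] R₂) := Algebra.TensorProduct.rightAlgebra
  obtain ⟨τ, hτ⟩ := exists_ringEquiv_tensorProduct hc₁ hc₂
  have hτ₁ : DiffCompat σ₁ τ := fun x ↦ by simpa using hτ x 1
  have hτ₂ : DiffCompat σ₂ τ := fun y ↦ (hτ 1 y).trans (by rw [map_one]; rfl)
  obtain ⟨d, hd, hd₁⟩ := hs₁.exists_ringKrullDim_isPushout_eq_add (K := K) hτ₁ hτ₂ hZ₁ hZ₂ hgen₂
  obtain ⟨e, he, hd₂⟩ := hs₂.exists_ringKrullDim_isPushout_eq_add (K := K) hτ₂ hτ₁ hZ₂ hZ₁ hgen₁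
  obtain rfl : d = e := by exact_mod_cast hd.symm.trans he
  exact ENat.WithBot.add_natCast_cancel.1 (hd₁.symm.trans hd₂)

section SigmaIdeal

variable {R : Type*} [CommRing R] {σ : R ≃+* R} {I J m P : Ideal R}

/-- The σ-ideals of a difference ring. -/
def IsSigmaIdeal (σ : R ≃+* R) (I : Ideal R) : Prop :=
  I ≤ I.comap σ

/-- The maximal elements among the proper σ-ideals; they need not be maximal ideals. -/
def IsMaximalSigmaIdeal (σ : R ≃+* R) (m : Ideal R) : Prop :=
  Maximal (fun I ↦ IsSigmaIdeal σ I ∧ I ≠ ⊤) m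

/-- The σ-core of an ideal: the largest σ-ideal contained in it. -/
def sigmaCore (σ : R ≃+* R) (P : Ideal R) : Ideal R :=
  ⨅ k : ℕ, (Ideal.comap σ)^[k] P

theorem isSigmaIdeal_sigmaCore : IsSigmaIdeal σ (sigmaCore σ P) := by
  rw [IsSigmaIdeal, sigmaCore, Ideal.comap_iInf]
  exact le_iInf fun k ↦ (iInf_le _ (k + 1)).trans_eq (Function.iterate_succ_apply' ..)

theorem sigmaCore_le : sigmaCore σ P ≤ P :=
  iInf_le _ 0

theorem IsSigmaIdeal.le_sigmaCore (hI : IsSigmaIdeal σ I) (hIP : I ≤ P) : I ≤ sigmaCore σ P := by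
  refine le_iInf fun k ↦ ?_
  induction k with
  | zero => exact hIP
  | succ k ih =>
    rw [Function.iterate_succ_apply']
    exact hI.trans (Ideal.comap_mono ih)

theorem IsSigmaIdeal.sup (hI : IsSigmaIdeal σ I) (hJ : IsSigmaIdeal σ J) :
    IsSigmaIdeal σ (I ⊔ J) :=
  sup_le (hI.trans (Ideal.comap_mono le_sup_left)) (hJ.trans (Ideal.comap_mono le_sup_right))

theorem IsSigmaIdeal.exists_le_isMaximalSigmaIdeal [IsNoetherianRing R] (hI : IsSigmaIdeal σ I)
    (hI' : I ≠ ⊤) : ∃ m, I ≤ m ∧ IsMaximalSigmaIdeal σ m :=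
  exists_maximal_ge_of_wellFoundedGT _ I ⟨hI, hI'⟩

namespace IsMaximalSigmaIdeal

theorem comap_eq (hm : IsMaximalSigmaIdeal σ m) : m.comap σ = m :=
  (hm.eq_of_ge ⟨Ideal.comap_mono hm.prop.1, Ideal.comap_ne_top _ hm.prop.2⟩ hm.prop.1)

theorem sup_eq_top (hI : IsMaximalSigmaIdeal σ I) (hJ : IsMaximalSigmaIdeal σ J) (hne : I ≠ J) :
    I ⊔ J = ⊤ := by
  by_contra htop
  have hsup : IsSigmaIdeal σ (I ⊔ J) ∧ I ⊔ J ≠ ⊤ := ⟨hI.prop.1.sup hJ.prop.1, htop⟩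
  exact hne ((hI.eq_of_le hsup le_sup_left).trans (hJ.eq_of_le hsup le_sup_right).symm)

theorem sigmaCore_eq (hm : IsMaximalSigmaIdeal σ m) (hmP : m ≤ P) (hP : P ≠ ⊤) :
    sigmaCore σ P = m :=
  (hm.eq_of_le ⟨isSigmaIdeal_sigmaCore, ne_top_of_le_ne_top hP sigmaCore_le⟩
    (hm.prop.1.le_sigmaCore hmP)).symm

theorem isSimpleDiff_quotient (hm : IsMaximalSigmaIdeal σ m) {τ : R ⧸ m ≃+* R ⧸ m}
    (hτ : ∀ x, τ (Ideal.Quotient.mk m x) = Ideal.Quotient.mk m (σ x)) : IsSimpleDiff τ := by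
  refine fun I hI ↦ or_iff_not_imp_right.2 fun htop ↦ ?_
  have hcomap : IsSigmaIdeal σ (I.comap (Ideal.Quotient.mk m)) := fun x hx ↦ by
    simpa only [Ideal.mem_comap, hτ] using! hI _ hx
  have hle : m ≤ I.comap (Ideal.Quotient.mk m) :=
    Ideal.mk_ker.ge.trans (Ideal.ker_le_comap _)
  have heq := hm.eq_of_le ⟨hcomap, Ideal.comap_ne_top _ htop⟩ hle
  rw [← Ideal.map_comap_of_surjective _ Ideal.Quotient.mk_surjective I, ← heq,
    Ideal.map_quotient_self]

end IsMaximalSigmaIdeal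

theorem exists_ringEquiv_quotient (hI : I.comap σ = I) :
    ∃ τ : R ⧸ I ≃+* R ⧸ I, ∀ x, τ (Ideal.Quotient.mk I x) = Ideal.Quotient.mk I (σ x) :=
  ⟨Ideal.quotientEquiv I I σ <| (Ideal.map_comap_of_surjective σ σ.surjective I).symm.trans
    congr(Ideal.map σ $hI), fun _ ↦ rfl⟩

theorem IsMaximalSigmaIdeal.exists_isPVRing_quotient {K : Type*} [CommRing K] [Algebra K R] {n : ℕ}
    {σK : K ≃+* K} {A : (Matrix (Fin n) (Fin n) K)ˣ} {V : (Matrix (Fin n) (Fin n) R)ˣ}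
    (hm : IsMaximalSigmaIdeal σ m) (hσ : DiffCompat σK σ) (hV : FundMatrix σ A V)
    (hgen : solutionAlgebra K V = ⊤) :
    ∃ τ : R ⧸ m ≃+* R ⧸ m, (∀ x, τ (Ideal.Quotient.mk m x) = Ideal.Quotient.mk m (σ x)) ∧
      IsPVRing σK τ A := by
  obtain ⟨τ, hτ⟩ := exists_ringEquiv_quotient hm.comap_eq
  refine ⟨τ, hτ, fun a ↦ ?_, hm.isSimpleDiff_quotient hτ,
    Matrix.GeneralLinearGroup.map (Ideal.Quotient.mk m) V, hV.map_algebraMap hτ, ?_⟩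
  · exact (hτ _).trans congr(Ideal.Quotient.mk m $(hσ a))
  · change solutionAlgebra K
      (Matrix.GeneralLinearGroup.map (Ideal.Quotient.mkₐ K m : R →+* R ⧸ m) V) = ⊤
    rw [← map_solutionAlgebra, hgen, Algebra.map_top, AlgHom.range_eq_top]
    exact Ideal.Quotient.mkₐ_surjective K m

theorem IsMaximalSigmaIdeal.le_of_le_comap_iterate (hm : IsMaximalSigmaIdeal σ m) {k : ℕ}
    (h : m ≤ (Ideal.comap σ)^[k] P) : m ≤ P := by
  induction k with
  | zero => exact h
  | succ k ih =>
    rw [Function.iterate_succ_apply', ← hm.comap_eq,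
      Ideal.comap_le_comap_iff_of_surjective _ σ.surjective] at h
    exact ih h

theorem comap_mem_minimalPrimes (hP : P ∈ minimalPrimes R) : P.comap σ ∈ minimalPrimes R := by
  have h : P.comap σ ∈ ((⊥ : Ideal R).comap σ).minimalPrimes :=
    Ideal.minimalPrimes_comap_of_surjective (f := (σ : R →+* R)) σ.surjective hP
  rwa [Ideal.comap_bot_of_injective σ σ.injective] at h

theorem IsMaximalSigmaIdeal.exists_le_of_mem_minimalPrimes [IsNoetherianRing R]
    (hmin : ∀ m, IsMaximalSigmaIdeal σ m → ∃ P ∈ minimalPrimes R, m ≤ P)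
    (hP : P ∈ minimalPrimes R) : ∃ m ≤ P, IsMaximalSigmaIdeal σ m := by
  obtain ⟨m, hle, hm⟩ := (isSigmaIdeal_sigmaCore (σ := σ) (P := P)).exists_le_isMaximalSigmaIdeal
    (ne_top_of_le_ne_top hP.1.1.ne_top sigmaCore_le)
  obtain ⟨Q, hQ, hmQ⟩ := hmin m hm
  have hPk (k : ℕ) : (Ideal.comap σ)^[k] P ∈ minimalPrimes R :=
    Set.MapsTo.iterate (fun _ ↦ comap_mem_minimalPrimes) k hP
  have hfin : (Set.range fun k ↦ (Ideal.comap σ)^[k] P).Finite :=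
    (minimalPrimes.finite_of_isNoetherianRing R).subset (Set.range_subset_iff.2 hPk)
  obtain ⟨k, hk⟩ : ∃ k, (Ideal.comap σ)^[k] P ≤ Q := by
    have hinf : hfin.toFinset.inf id ≤ Q := by
      rw [Finset.inf_id_eq_sInf, hfin.coe_toFinset, sInf_range]
      exact hle.trans hmQ
    obtain ⟨p, hp, hpQ⟩ := (hQ.1.1.inf_le').1 hinf
    obtain ⟨k, rfl⟩ := hfin.mem_toFinset.1 hp
    exact ⟨k, hpQ⟩
  refine ⟨m, ?_, hm⟩
  exact hm.le_of_le_comap_iterate (hmQ.trans (hQ.2 (hPk k).1 hk))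

theorem exists_isMaximalSigmaIdeal_decomposition [IsNoetherianRing R] [IsReduced R] [Nontrivial R]
    (hmin : ∀ m, IsMaximalSigmaIdeal σ m → ∃ P ∈ minimalPrimes R, m ≤ P) :
    ∃ (r : ℕ) (_ : 0 < r) (I : Fin r → Ideal R), (∀ j, IsMaximalSigmaIdeal σ (I j)) ∧
      (Pairwise fun i j ↦ I i ⊔ I j = ⊤) ∧ ⨅ j, I j = ⊥ := by
  have hfin : {m | IsMaximalSigmaIdeal σ m}.Finite := by
    refine ((minimalPrimes.finite_of_isNoetherianRing R).image (sigmaCore σ)).subset fun m hm ↦ ?_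
    obtain ⟨P, hP, hmP⟩ := hmin m hm
    exact ⟨P, hP, hm.sigmaCore_eq hmP hP.1.1.ne_top⟩
  have hinf : sInf {m | IsMaximalSigmaIdeal σ m} = ⊥ := by
    rw [eq_bot_iff, ← Ideal.zero_eq_bot, ← nilradical_eq_zero R, nilradical,
      ← Ideal.sInf_minimalPrimes]
    refine le_sInf fun P hP ↦ ?_
    obtain ⟨m, hmP, hm⟩ := IsMaximalSigmaIdeal.exists_le_of_mem_minimalPrimes hmin hP
    exact sInf_le_of_le (Set.mem_ofPred.2 hm) hmP
  have hbot : IsSigmaIdeal σ (⊥ : Ideal R) := bot_le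
  obtain ⟨m₀, -, hm₀⟩ := hbot.exists_le_isMaximalSigmaIdeal bot_ne_top
  have := hfin.to_subtype
  let e := (Finite.equivFin {m | IsMaximalSigmaIdeal σ m}).symm
  refine ⟨_, Fin.pos_iff_nonempty.2 ⟨e.symm ⟨m₀, hm₀⟩⟩, fun j ↦ e j, fun j ↦ (e j).2,
    fun i j hij ↦ (e i).2.sup_eq_top (e j).2 fun h ↦ hij (e.injective (Subtype.ext h)), ?_⟩
  rw [← hinf, sInf_eq_iInf', e.iInf_comp (g := Subtype.val)]

end SigmaIdeal

section DirectSum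

variable {K R : Type*} [CommRing K] [CommRing R] [Algebra K R] {n : ℕ} {σK : K ≃+* K}
  {σ : R ≃+* R} {A : (Matrix (Fin n) (Fin n) K)ˣ}

/-- The difference ring `R` is a finite direct sum of Picard-Vessiot rings for `σ(X) = A X`, each
summand being given as the quotient of `R` by a σ-ideal. -/
def IsDirectSumOfPVRings (σK : K ≃+* K) (σ : R ≃+* R) (A : (Matrix (Fin n) (Fin n) K)ˣ) : Prop :=
  ∃ (r : ℕ) (_ : 0 < r) (I : Fin r → Ideal R),
    (∀ j, IsSigmaIdeal σ (I j)) ∧ (Pairwise fun i j ↦ I i ⊔ I j = ⊤) ∧ (⨅ j, I j) = ⊥ ∧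
    Function.Bijective (fun (x : R) (j : Fin r) ↦ Ideal.Quotient.mk (I j) x) ∧
    ∀ j, ∃ τ : R ⧸ I j ≃+* R ⧸ I j,
      (∀ x, τ (Ideal.Quotient.mk (I j) x) = Ideal.Quotient.mk (I j) (σ x)) ∧ IsPVRing σK τ A

theorem isDirectSumOfPVRings_of_subsingleton [Subsingleton R] : IsDirectSumOfPVRings σK σ A := by
  have (I : Ideal R) : Subsingleton (R ⧸ I) := Ideal.Quotient.mk_surjective.subsingleton
  refine ⟨1, one_pos, fun _ ↦ ⊥, fun _ ↦ bot_le, fun i j hij ↦ (hij (Subsingleton.elim i j)).elim,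
    iInf_const, ⟨fun _ _ _ ↦ Subsingleton.elim _ _, fun _ ↦ ⟨0, Subsingleton.elim _ _⟩⟩, fun j ↦
    ⟨.refl _, fun _ ↦ Subsingleton.elim _ _, fun _ ↦ Subsingleton.elim _ _,
      fun _ _ ↦ .inl (Subsingleton.elim _ _), 1, Subsingleton.elim _ _, Subsingleton.elim _ _⟩⟩

theorem isDirectSumOfPVRings_of_forall_exists_minimalPrimes [IsNoetherianRing R] [IsReduced R]
    [Nontrivial R] {V : (Matrix (Fin n) (Fin n) R)ˣ} (hσ : DiffCompat σK σ)
    (hV : FundMatrix σ A V) (hgen : solutionAlgebra K V = ⊤)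
    (hmin : ∀ m, IsMaximalSigmaIdeal σ m → ∃ P ∈ minimalPrimes R, m ≤ P) :
    IsDirectSumOfPVRings σK σ A := by
  obtain ⟨r, hr, I, hI, hpair, hinf⟩ := exists_isMaximalSigmaIdeal_decomposition hmin
  exact ⟨r, hr, I, fun j ↦ (hI j).prop.1, hpair, hinf, bijective_quotientMk_pi hpair hinf,
    fun j ↦ (hI j).exists_isPVRing_quotient hσ hV hgen⟩

end DirectSum

theorem statement_10_general {K R' R'' : Type*} [Field K] [CommRing R'] [Algebra K R']
    [CommRing R''] [Algebra K R''] [IsReduced R''] {n : ℕ} {σK : K ≃+* K}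
    {A : (Matrix (Fin n) (Fin n) K)ˣ} {σ' : R' ≃+* R'} {σ'' : R'' ≃+* R''}
    {V : (Matrix (Fin n) (Fin n) R'')ˣ} (hPV : IsPVRing σK σ' A) (hσ'' : DiffCompat σK σ'')
    (hV : FundMatrix σ'' A V) (hgen : solutionAlgebra K V = ⊤)
    (hdim : ringKrullDim R'' = ringKrullDim R') : IsDirectSumOfPVRings σK σ'' A := by
  cases subsingleton_or_nontrivial R''
  · exact isDirectSumOfPVRings_of_subsingleton
  have : Algebra.FiniteType K R'' := finiteType_of_solutionAlgebra_eq_top hgen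
  have : IsNoetherianRing R'' := Algebra.FiniteType.isNoetherianRing K R''
  obtain ⟨d, hd⟩ := exists_ringKrullDim_eq_natCast K (B := R'')
  have : Nontrivial R' := not_subsingleton_iff_nontrivial.1 fun _ ↦ WithBot.natCast_ne_bot d <|
    hd.symm.trans (hdim.trans ringKrullDim_eq_bot_of_subsingleton)
  refine isDirectSumOfPVRings_of_forall_exists_minimalPrimes hσ'' hV hgen fun m hm ↦ ?_
  obtain ⟨τ, -, hτ⟩ := hm.exists_isPVRing_quotient hσ'' hV hgen
  have : Nontrivial (R'' ⧸ m) := Ideal.Quotient.nontrivial_iff.2 hm.prop.2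
  exact exists_mem_minimalPrimes_of_ringKrullDim_le hd (hdim.trans (hPV.ringKrullDim_eq hτ)).le

/-- If `C_K = D_K`, `R'` is a Picard-Vessiot ring for `σ(X) = AX` over `K`,
and `R'' = K[V, 1/det V]` is a reduced difference ring extension with
`Kr.dim R'' = Kr.dim R'`, then `R''` is a finite direct sum of Picard-Vessiot rings. -/
theorem statement_10 {K : Type} [Field K] [CharZero K] (σK : K ≃+* K)
    (hCD : ∀ a : K, (∃ m, 0 < m ∧ (⇑σK)^[m] a = a) → σK a = a)
    {n : ℕ} (A : (Matrix (Fin n) (Fin n) K)ˣ)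
    {R' : Type} [CommRing R'] [Algebra K R'] (σ' : R' ≃+* R')
    (hPV : IsPVRing σK σ' A)
    {R'' : Type} [CommRing R''] [Algebra K R''] [IsReduced R''] (σ'' : R'' ≃+* R'')
    (hcompat : DiffCompat σK σ'')
    (V : (Matrix (Fin n) (Fin n) R'')ˣ) (hV : FundMatrix σ'' A V)
    (hgen : Algebra.adjoin K
      (entries V.val ∪ entries (↑V⁻¹ : Matrix (Fin n) (Fin n) R'')) = ⊤)
    (hdim : ringKrullDim R'' = ringKrullDim R') :
    ∃ (r : ℕ) (_ : 0 < r) (I : Fin r → Ideal R''),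
      -- each I_j is a σ-ideal
      (∀ j, ∀ x ∈ I j, σ'' x ∈ I j) ∧
      -- pairwise comaximal
      (Pairwise fun j j' => I j ⊔ I j' = ⊤) ∧
      -- with zero intersection
      (⨅ j, I j) = ⊥ ∧
      -- so that R'' ≅ ⊕_j R''/I_j (as rings, via the canonical map)
      Function.Bijective
        (fun (x : R'') (j : Fin r) => Ideal.Quotient.mk (I j) x) ∧
      -- and each R''/I_j, with the induced σ, is a Picard-Vessiot ring over K
      (∀ j, ∃ σj : (R'' ⧸ I j) ≃+* (R'' ⧸ I j),
        (∀ x, σj (Ideal.Quotient.mk (I j) x) = Ideal.Quotient.mk (I j) (σ'' x)) ∧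
        IsPVRing σK σj A) :=
  statement_10_general hPV hcompat hV hgen hdim

end PV
end
end

section
/- Let K be a difference field of characteristic zero with C_K = D_K and A ∈ GL_n(K). Let R'' = K[V, 1/det(V)] be a difference ring extension of K that is an integral domain, generated over K by the entries of a matrix V ∈ GL_n(R'') with σ(V) = AV and by 1/det(V), and let L₁ be the field of fractions of R'' (with σ extended canonically). If C_{L₁} is a finite algebraic extension of C_K, then R'' is a simple difference ring, i.e., a Picard-Vessiot ring for σ(X) = AX over K. -/
open scoped TensorProduct

noncomputable section

namespace PV

set_option synthInstance.maxHeartbeats 1000000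

/-!
Let `I` be a proper `σ`-ideal of `R`, let `L` be the fraction field of `R` with constants `C`, and
let `T = L ⊗[K] (R ⧸ I)`, with the two maps `α, β : R → T` into the left and right factors.
Both `α V` and `β V` solve `σ(X) = AX`, so `M = (β V)⁻¹ * α V` is fixed by `σ`, and the entries of
`M` and `M⁻¹` generate `T` over `L`. Elements of `C[M, M⁻¹]` that are linearly independent over `C`
stay so over `L`, hence a maximal ideal of `C[M, M⁻¹]` extends to a proper ideal of `T`. In a
residue field `T ⧸ Q` above it, `M` is algebraic over `C` by Zariski's lemma, and so over `K`.
Thus `α(R)`, a copy of `R` as `L` is a field, is algebraic over `β(R)`; comparing transcendence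
degrees over `K` shows that `β` is injective. But `β` kills `I`, so `I = 0`.
-/

section TranscendenceDegree

open Algebra Cardinal Function

universe v w

theorem injective_of_algebraicIndependent_comp {K R S ι : Type*} [CommRing K] [CommRing R]
    [IsDomain R] [CommRing S] [Algebra K R] [Algebra K S] {z : ι → R}
    [Algebra.IsAlgebraic (adjoin K (Set.range z)) R] (φ : R →ₐ[K] S)
    (hφz : AlgebraicIndependent K (φ ∘ z)) : Injective φ := by
  rw [injective_iff_map_eq_zero]
  intro r hr
  by_contra hr0
  refine Ideal.comap_ne_bot_of_algebraic_mem (I := RingHom.ker φ) hr0 hr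
    (Algebra.IsAlgebraic.isAlgebraic (R := adjoin K (Set.range z)) r) (eq_bot_iff.mpr ?_)
  rintro ⟨p, hp⟩ hφp
  rw [adjoin_range_eq_range_aeval] at hp
  obtain ⟨P, rfl⟩ := hp
  have hP : MvPolynomial.aeval (φ ∘ z) P = 0 := by
    rw [Function.comp_def, ← MvPolynomial.comp_aeval_apply]
    exact hφp
  obtain rfl : P = 0 := hφz (hP.trans (map_zero _).symm)
  exact Subtype.ext (map_zero _)

theorem injective_of_surjective_of_lift_trdeg_le {K : Type*} {R : Type v} {S : Type w}
    [CommRing K] [CommRing R] [IsDomain R] [CommRing S] [IsDomain S] [Algebra K R] [Algebra K S]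
    [FaithfulSMul K S] {φ : R →ₐ[K] S} (hφ : Surjective φ)
    (hfin : trdeg K R < ℵ₀) (hle : lift.{w} (trdeg K R) ≤ lift.{v} (trdeg K S)) :
    Injective φ := by
  have := (algebraMap K S).domain_nontrivial
  obtain ⟨ι, y, hy⟩ := exists_isTranscendenceBasis' K S
  choose z hz using fun i => hφ (y i)
  have hφz : φ ∘ z = y := funext hz
  have hz_indep : AlgebraicIndependent K z := .of_comp φ (hφz ▸ hy.1)
  have hz_basis : IsTranscendenceBasis K z :=
    hz_indep.isTranscendenceBasis_of_lift_trdeg_le hfin (hy.cardinalMk_eq_trdeg ▸ hle)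
  have := hz_basis.isAlgebraic
  exact injective_of_algebraicIndependent_comp φ (hφz ▸ hy.1)

theorem lift_trdeg_le_of_forall_isAlgebraic {K : Type*} {R : Type v} {S : Type w}
    [CommRing K] [CommRing R] [CommRing S] [IsDomain S] [Algebra K R] [Algebra K S]
    [FaithfulSMul K S] {f : R →ₐ[K] S} (hf : Injective f) {A : Subalgebra K S}
    (halg : ∀ r, IsAlgebraic A (f r)) : lift.{w} (trdeg K R) ≤ lift.{v} (trdeg K A) := by
  have := FaithfulSMul.algebraMap_injective K S |>.isDomain
  let E := Subalgebra.algebraicClosure A S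
  let f' : R →ₐ[K] E := f.codRestrict (E.restrictScalars K) halg
  have hf' : Injective f' := (AlgHom.injective_codRestrict _ _ _).mpr hf
  have htrdeg : trdeg K A = trdeg K E := by
    rw [← trdeg_add_eq K A (A := E), trdeg_eq_zero (R := A) (A := E), add_zero]
  exact htrdeg ▸ lift_trdeg_le_of_injective f' hf'

theorem injective_of_forall_isAlgebraic_range {K R S : Type*} [CommRing K] [CommRing R]
    [CommRing S] [IsDomain S] [Algebra K R] [Algebra K S] [FaithfulSMul K S]
    {f g : R →ₐ[K] S} (hf : Injective f) (hfin : trdeg K R < ℵ₀)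
    (halg : ∀ r, IsAlgebraic g.range (f r)) : Injective g := by
  have := FaithfulSMul.algebraMap_injective K S |>.isDomain
  have := hf.isDomain
  have hg : Injective g.rangeRestrict :=
    injective_of_surjective_of_lift_trdeg_le g.rangeRestrict_surjective hfin
      (lift_trdeg_le_of_forall_isAlgebraic hf halg)
  exact (AlgHom.injective_codRestrict _ _ _).mp hg

end TranscendenceDegree

section Integrality

theorem isIntegral_of_isIntegral_subfield {K L S : Type*} [CommRing K] [Field L] [CommRing S]
    [Algebra K L] [Algebra K S] [Algebra L S] [IsScalarTower K L S] {F : Subfield L}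
    (hF : ∀ c ∈ F, IsIntegral K c) {x : S} (hx : IsIntegral F x) : IsIntegral K x := by
  let i : F →+* integralClosure K L := F.subtype.codRestrict _ fun c => hF c c.2
  have hx' : IsIntegral (integralClosure K L) x := hx.map_of_comp_eq i (RingHom.id S) rfl
  exact isIntegral_trans x hx'

theorem isAlgebraic_of_subfieldFinite_map {K L : Type*} [Field K] [Field L] [Algebra K L]
    {E : Subfield K} {F : Subfield L} (h : SubfieldFinite (E.map (algebraMap K L)) F)
    {c : L} (hc : c ∈ F) : IsAlgebraic K c := by
  obtain ⟨hle, hfin⟩ := h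
  let : Algebra (E.map (algebraMap K L)) F := (Subfield.inclusion hle).toAlgebra
  have : Module.Finite (E.map (algebraMap K L)) F := hfin
  have hcF : IsIntegral (E.map (algebraMap K L)) (⟨c, hc⟩ : F) := .of_finite _ _
  have hcL : IsIntegral (E.map (algebraMap K L)) c :=
    hcF.map_of_comp_eq (T := E.map (algebraMap K L)) (RingHom.id _) F.subtype rfl
  have hE : ∀ a ∈ E.map (algebraMap K L), IsIntegral K a := by
    rintro _ ⟨a, _, rfl⟩
    exact isIntegral_algebraMap
  exact (isIntegral_of_isIntegral_subfield hE hcL).isAlgebraic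

end Integrality

section Constants

open scoped Pointwise

variable {L : Type*} [Field L] {σ : L ≃+* L}

theorem mem_of_mem_span_of_fixed {M : Type*} [AddCommGroup M] [Module L M]
    (f : M →ₛₗ[(σ : L →+* L)] M) (N : Submodule (constantsF σ) M) (hN : ∀ x ∈ N, f x = x)
    {x : M} (hx : x ∈ Submodule.span L (N : Set M)) (hfx : f x = x) : x ∈ N := by
  obtain ⟨b, hbN, hspan, hli⟩ := exists_linearIndependent L (N : Set M)
  obtain ⟨c, rfl⟩ := (Finsupp.mem_span_iff_linearCombination L b x).mp (hspan ▸ hx)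
  have hσc : c.mapRange σ (map_zero σ) = c := by
    apply hli
    rw [← hfx, Finsupp.linearCombination_apply, Finsupp.linearCombination_apply,
      Finsupp.sum_mapRange_index (by simp), map_finsuppSum]
    refine Finsupp.sum_congr fun y _ => ?_
    rw [map_smulₛₗ, hN _ (hbN y.2)]
    rfl
  rw [Finsupp.linearCombination_apply]
  refine Submodule.sum_mem _ fun y _ => ?_
  have hcy : σ (c y) = c y := DFunLike.congr_fun hσc y
  exact N.smul_mem (⟨c y, hcy⟩ : constantsF σ) (hbN y.2)

variable {T : Type*} [CommRing T] [Algebra L T]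

theorem fixed_of_mem_adjoin_constantsF {τ : T →+* T}
    (hτ : ∀ l, τ (algebraMap L T l) = algebraMap L T (σ l)) {s : Set T}
    (hs : ∀ x ∈ s, τ x = x) {x : T} (hx : x ∈ Algebra.adjoin (constantsF σ) s) : τ x = x := by
  induction hx using Algebra.adjoin_induction with
  | mem x hx => exact hs x hx
  | algebraMap c => exact (hτ c).trans (congrArg (algebraMap L T) c.2)
  | add x y _ _ hx hy => rw [map_add, hx, hy]
  | mul x y _ _ hx hy => rw [map_mul, hx, hy]

theorem span_adjoin_constantsF_eq_top {s : Set T} (hs : Algebra.adjoin L s = ⊤) :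
    Submodule.span L (Algebra.adjoin (constantsF σ) s : Set T) = ⊤ := by
  rw [eq_top_iff, ← Algebra.top_toSubmodule, ← hs, Algebra.adjoin_eq_span]
  exact Submodule.span_mono
    (Submonoid.closure_le (S := (Algebra.adjoin (constantsF σ) s).toSubmonoid).mpr
      Algebra.subset_adjoin)

theorem comap_map_val_eq_self_of_fixed {τ : T →+* T}
    (hτ : ∀ l, τ (algebraMap L T l) = algebraMap L T (σ l))
    {B : Subalgebra (constantsF σ) T} (hB : ∀ x ∈ B, τ x = x)
    (hspan : Submodule.span L (B : Set T) = ⊤) (I : Ideal B) :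
    (I.map B.val).comap B.val = I := by
  refine le_antisymm (fun x hx => ?_) Ideal.le_comap_map
  let τₗ : T →ₛₗ[(σ : L →+* L)] T :=
    { τ with map_smul' l t := by simp [Algebra.smul_def, hτ] }
  let N : Submodule (constantsF σ) T := (I.restrictScalars _).map B.val.toLinearMap
  have hBN : (B : Set T) • (N : Set T) ⊆ N := by
    rintro _ ⟨b, hb, _, ⟨y, hy, rfl⟩, rfl⟩
    exact ⟨⟨b, hb⟩ * y, I.mul_mem_left _ hy, rfl⟩
  have hxspan : (x : T) ∈ Submodule.span L (N : Set T) := by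
    have hx' : (x : T) ∈ (Submodule.span T (N : Set T)).restrictScalars L := hx
    rw [← Submodule.span_smul_of_span_eq_top hspan] at hx'
    exact Submodule.span_mono hBN hx'
  have hNfix : ∀ y ∈ N, τ y = y := by
    rintro _ ⟨y, _, rfl⟩
    exact hB y y.2
  obtain ⟨y, hy, hyx⟩ := mem_of_mem_span_of_fixed τₗ N hNfix hxspan (hB x x.2)
  exact Subtype.ext hyx ▸ hy

theorem exists_isMaximal_forall_isIntegral_constantsF [Nontrivial T] {τ : T →+* T}
    (hτ : ∀ l, τ (algebraMap L T l) = algebraMap L T (σ l)) {s : Set T} (hfin : s.Finite)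
    (hs : ∀ x ∈ s, τ x = x) (hgen : Algebra.adjoin L s = ⊤) :
    ∃ Q : Ideal T, Q.IsMaximal ∧ ∀ x ∈ s, IsIntegral (constantsF σ) (Ideal.Quotient.mk Q x) := by
  let B := Algebra.adjoin (constantsF σ) s
  obtain ⟨m, hm⟩ := Ideal.exists_maximal B
  have hcomap : (m.map B.val).comap B.val = m :=
    comap_map_val_eq_self_of_fixed hτ (fun _ => fixed_of_mem_adjoin_constantsF hτ hs)
      (span_adjoin_constantsF_eq_top hgen) m
  have hmap : m.map B.val ≠ ⊤ := fun htop => hm.ne_top (by rw [← hcomap, htop, Ideal.comap_top])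
  obtain ⟨Q, hQ, hmQ⟩ := Ideal.exists_le_maximal _ hmap
  refine ⟨Q, hQ, fun x hx => ?_⟩
  have : Algebra.FiniteType (constantsF σ) B :=
    (Subalgebra.fg_iff_finiteType _).mp (⟨hfin.toFinset, by rw [hfin.coe_toFinset]⟩)
  let := Ideal.Quotient.field m
  have : Module.Finite (constantsF σ) (B ⧸ m) := finite_of_finite_type_of_isJacobsonRing _ _
  have hx_int : IsIntegral (constantsF σ)
      (Ideal.Quotient.mk m (⟨x, Algebra.subset_adjoin hx⟩ : B)) := .of_finite _ _
  exact hx_int.map (Ideal.quotientMapₐ Q B.val (Ideal.map_le_iff_le_comap.mp hmQ))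

end Constants

section UnitEntries

open Matrix hiding mul_inv_rev

variable {R S : Type*} [CommRing R] [CommRing S] {n : ℕ}

/-- The entries of an invertible matrix and of its inverse. Adjoining them is the same as adjoining
the entries of the matrix and the inverse of its determinant, as for a Picard-Vessiot ring. -/
def unitEntries (Z : GL (Fin n) R) : Set R :=
  entries Z.val ∪ entries Z⁻¹.val

theorem finite_unitEntries (Z : GL (Fin n) R) : (unitEntries Z).Finite :=
  (Set.finite_range _).union (Set.finite_range _)

theorem unitEntries_inv (Z : GL (Fin n) R) : unitEntries Z⁻¹ = unitEntries Z := by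
  rw [unitEntries, inv_inv, Set.union_comm, unitEntries]

theorem unitEntries_map (f : R →+* S) (Z : GL (Fin n) R) :
    unitEntries (GeneralLinearGroup.map f Z) = f '' unitEntries Z := by
  rw [unitEntries, unitEntries, Set.image_union, entries, entries, entries, entries,
    ← Set.range_comp, ← Set.range_comp]
  rfl

theorem entries_mul_subset {P : Type*} [SetLike P R] [SubsemiringClass P R] {p : P}
    {X Y : Matrix (Fin n) (Fin n) R} (hX : entries X ⊆ p) (hY : entries Y ⊆ p) :
    entries (X * Y) ⊆ p := by
  rintro _ ⟨⟨i, j⟩, rfl⟩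
  have hXY : ∑ k, X i k * Y k j ∈ p :=
    sum_mem fun k _ => mul_mem (hX ⟨(i, k), rfl⟩) (hY ⟨(k, j), rfl⟩)
  exact hXY

theorem unitEntries_mul_subset {P : Type*} [SetLike P R] [SubsemiringClass P R] {p : P}
    {X Y : GL (Fin n) R} (hX : unitEntries X ⊆ p) (hY : unitEntries Y ⊆ p) :
    unitEntries (X * Y) ⊆ p := by
  rw [unitEntries, Set.union_subset_iff] at *
  rw [mul_inv_rev]
  exact ⟨entries_mul_subset hX.1 hY.1, entries_mul_subset hY.2 hX.2⟩

theorem adjoin_unitEntries_inv_mul_map_eq_top [Algebra R S] {W : GL (Fin n) S}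
    (hW : Algebra.adjoin R (unitEntries W) = ⊤) (Z : GL (Fin n) R) :
    Algebra.adjoin R (unitEntries (W⁻¹ * GeneralLinearGroup.map (algebraMap R S) Z)) = ⊤ := by
  set M := W⁻¹ * GeneralLinearGroup.map (algebraMap R S) Z with hM
  have hWM : W = GeneralLinearGroup.map (algebraMap R S) Z * M⁻¹ := by
    rw [hM, mul_inv_rev, inv_inv, mul_inv_cancel_left]
  rw [eq_top_iff, ← hW, Algebra.adjoin_le_iff, hWM]
  refine unitEntries_mul_subset ?_ ((unitEntries_inv M).trans_subset Algebra.subset_adjoin)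
  rw [unitEntries_map]
  rintro _ ⟨x, _, rfl⟩
  exact Subalgebra.algebraMap_mem _ x

theorem map_map_eq_map_mul_map {σ : R →+* R} {τ : S →+* S} {f : R →+* S}
    (hf : τ.comp f = f.comp σ) {a Z : GL (Fin n) R} (hZ : GeneralLinearGroup.map σ Z = a * Z) :
    GeneralLinearGroup.map τ (GeneralLinearGroup.map f Z) =
      GeneralLinearGroup.map f a * GeneralLinearGroup.map f Z := by
  calc
    _ = GeneralLinearGroup.map (τ.comp f) Z := rfl
    _ = GeneralLinearGroup.map f (GeneralLinearGroup.map σ Z) := by rw [hf]; rfl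
    _ = _ := by rw [hZ, map_mul]

theorem map_inv_mul_eq_self {τ : R →+* R} {a W Z : GL (Fin n) R}
    (hW : GeneralLinearGroup.map τ W = a * W) (hZ : GeneralLinearGroup.map τ Z = a * Z) :
    GeneralLinearGroup.map τ (W⁻¹ * Z) = W⁻¹ * Z := by
  rw [map_mul, map_inv, hW, hZ, mul_inv_rev, mul_assoc, inv_mul_cancel_left]

theorem fixed_of_mem_unitEntries {τ : R →+* R} {M : GL (Fin n) R}
    (hM : GeneralLinearGroup.map τ M = M) {x : R} (hx : x ∈ unitEntries M) : τ x = x := by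
  have hMinv : GeneralLinearGroup.map τ M⁻¹ = M⁻¹ := by rw [map_inv, hM]
  obtain ⟨⟨i, j⟩, rfl⟩ | ⟨⟨i, j⟩, rfl⟩ := hx
  · exact congrArg (fun X : GL (Fin n) R => X.val i j) hM
  · exact congrArg (fun X : GL (Fin n) R => X.val i j) hMinv

end UnitEntries

section Simplicity

open Matrix Function

section CommRing

variable {K R : Type*} [CommRing K] [CommRing R] [Algebra K R] {σR : R ≃+* R} {n : ℕ}
  {A : (Matrix (Fin n) (Fin n) K)ˣ} {V : (Matrix (Fin n) (Fin n) R)ˣ}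

theorem FundMatrix.map_map_eq (hV : FundMatrix σR A V) {T : Type*} [CommRing T] [Algebra K T]
    {τ : T →+* T} {f : R →ₐ[K] T} (hf : ∀ r, τ (f r) = f (σR r)) :
    GeneralLinearGroup.map τ (GeneralLinearGroup.map (f : R →+* T) V) =
      GeneralLinearGroup.map (algebraMap K T) A * GeneralLinearGroup.map (f : R →+* T) V := by
  have hσV : GeneralLinearGroup.map (σR : R →+* R) V =
      GeneralLinearGroup.map (algebraMap K R) A * V := Units.ext hV
  have hτf : τ.comp (f : R →+* T) = (f : R →+* T).comp (σR : R →+* R) := RingHom.ext hf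
  have hfV := map_map_eq_map_mul_map hτf hσV
  rw [← f.comp_algebraMap]
  exact hfV

theorem range_eq_adjoin_unitEntries_map (hgen : Algebra.adjoin K (unitEntries V) = ⊤)
    {S : Type*} [CommRing S] [Algebra K S] (f : R →ₐ[K] S) :
    f.range = Algebra.adjoin K (unitEntries (GeneralLinearGroup.map (f : R →+* S) V)) := by
  rw [unitEntries_map, ← Algebra.map_top, ← hgen, AlgHom.map_adjoin]
  rfl

theorem finiteType_of_adjoin_unitEntries_eq_top (hgen : Algebra.adjoin K (unitEntries V) = ⊤) :
    Algebra.FiniteType K R :=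
  ⟨⟨(finite_unitEntries V).toFinset, by rw [Set.Finite.coe_toFinset, hgen]⟩⟩

end CommRing

variable {K R L : Type*} [Field K] [CommRing R] [Field L] [Algebra K R] [Algebra K L] [Algebra R L]
  [IsScalarTower K R L] {σR : R ≃+* R} {σL : L ≃+* L} {n : ℕ}
  {A : (Matrix (Fin n) (Fin n) K)ˣ} {V : (Matrix (Fin n) (Fin n) R)ˣ}

theorem isAlgebraic_range_of_map_eq_map_mul (hgen : Algebra.adjoin K (unitEntries V) = ⊤)
    {S : Type*} [CommRing S] [IsDomain S] [Algebra K S] {f g : R →ₐ[K] S} {N : GL (Fin n) S}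
    (hfg : GeneralLinearGroup.map (f : R →+* S) V = GeneralLinearGroup.map (g : R →+* S) V * N)
    (hN : ∀ x ∈ unitEntries N, IsAlgebraic K x) (r : R) : IsAlgebraic g.range (f r) := by
  let E := Subalgebra.algebraicClosure g.range S
  have hgE : unitEntries (GeneralLinearGroup.map (g : R →+* S) V) ⊆ E := by
    rw [unitEntries_map]
    rintro _ ⟨x, _, rfl⟩
    exact E.algebraMap_mem (g.rangeRestrict x)
  have hNE : unitEntries N ⊆ E := fun x hx => (hN x hx).isIntegral.tower_top.isAlgebraic
  have hfE : f.range ≤ E.restrictScalars K := by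
    rw [range_eq_adjoin_unitEntries_map hgen, hfg, Algebra.adjoin_le_iff]
    exact unitEntries_mul_subset hgE hNE
  exact hfE ⟨r, rfl⟩

theorem FundMatrix.injective_of_adjoin_range_eq_top [FaithfulSMul R L] (hV : FundMatrix σR A V)
    (hRL : DiffCompat σR σL) (hgen : Algebra.adjoin K (unitEntries V) = ⊤)
    (hconst : ∀ c ∈ constantsF σL, IsAlgebraic K c)
    {T : Type*} [CommRing T] [Nontrivial T] [Algebra K T] [Algebra L T] [IsScalarTower K L T]
    {τ : T →+* T} (hτ : ∀ l, τ (algebraMap L T l) = algebraMap L T (σL l))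
    {β : R →ₐ[K] T} (hβ : ∀ r, τ (β r) = β (σR r))
    (hadjoin : Algebra.adjoin L (Set.range β) = ⊤) : Injective β := by
  let α : R →ₐ[K] T := (IsScalarTower.toAlgHom K L T).comp (IsScalarTower.toAlgHom K R L)
  have hα : ∀ r, τ (α r) = α (σR r) := fun r => (hτ _).trans (congrArg (algebraMap L T) (hRL r))
  let αV := GeneralLinearGroup.map (α : R →+* T) V
  let βV := GeneralLinearGroup.map (β : R →+* T) V
  have hβV : Algebra.adjoin L (unitEntries βV) = ⊤ := by
    rw [← hadjoin, ← AlgHom.coe_range, range_eq_adjoin_unitEntries_map hgen,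
      Algebra.adjoin_adjoin_of_tower]
  let M := βV⁻¹ * αV
  have hM_fixed : ∀ x ∈ unitEntries M, τ x = x := fun _ =>
    fixed_of_mem_unitEntries (map_inv_mul_eq_self (hV.map_map_eq hβ) (hV.map_map_eq hα))
  have hM_gen : Algebra.adjoin L (unitEntries M) = ⊤ :=
    adjoin_unitEntries_inv_mul_map_eq_top hβV (GeneralLinearGroup.map (algebraMap R L) V)
  obtain ⟨Q, hQ, hMQ⟩ := exists_isMaximal_forall_isIntegral_constantsF hτ
    (finite_unitEntries M) hM_fixed hM_gen
  let q := Ideal.Quotient.mkₐ K Q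
  have hqα : Injective (q.comp α) :=
    (algebraMap L (T ⧸ Q)).injective.comp (FaithfulSMul.algebraMap_injective R L)
  have hqM : GeneralLinearGroup.map (q.comp α : R →+* T ⧸ Q) V =
      GeneralLinearGroup.map (q.comp β : R →+* T ⧸ Q) V *
        GeneralLinearGroup.map (q : T →+* T ⧸ Q) M := by
    change GeneralLinearGroup.map (q : T →+* T ⧸ Q) αV =
      GeneralLinearGroup.map (q : T →+* T ⧸ Q) βV * GeneralLinearGroup.map (q : T →+* T ⧸ Q) M
    rw [← map_mul, mul_inv_cancel_left]
  have hqM_alg : ∀ x ∈ unitEntries (GeneralLinearGroup.map (q : T →+* T ⧸ Q) M),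
      IsAlgebraic K x := by
    rw [unitEntries_map]
    rintro _ ⟨x, hx, rfl⟩
    exact (isIntegral_of_isIntegral_subfield (fun c hc => (hconst c hc).isIntegral)
      (hMQ x hx)).isAlgebraic
  have := finiteType_of_adjoin_unitEntries_eq_top hgen
  have hqβ : Injective (q.comp β) :=
    injective_of_forall_isAlgebraic_range hqα trdeg_lt_aleph0_of_finiteType
      (isAlgebraic_range_of_map_eq_map_mul hgen hqM hqM_alg)
  exact Injective.of_comp (f := q) hqβ

theorem statement_11_general [FaithfulSMul R L] {σK : K ≃+* K} (hKR : DiffCompat σK σR)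
    (hRL : DiffCompat σR σL) (hV : FundMatrix σR A V)
    (hgen : Algebra.adjoin K (entries V.val ∪ entries V⁻¹.val) = ⊤)
    (hconst : ∀ c ∈ constantsF σL, IsAlgebraic K c) : IsPVRing σK σR A := by
  refine ⟨hKR, fun I hI => or_iff_not_imp_right.mpr fun hI_top => ?_, V, hV, hgen⟩
  have : Nontrivial (R ⧸ I) := Ideal.Quotient.nontrivial_iff.mpr hI_top
  let σI : R ⧸ I →+* R ⧸ I := Ideal.quotientMap I (σR : R →+* R) hI
  have hKL : (σL : L →+* L).comp (algebraMap K L) = (algebraMap K L).comp σK := by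
    ext x
    simp only [RingHom.comp_apply, IsScalarTower.algebraMap_apply K R L]
    exact (hRL _).trans (congrArg _ (hKR x))
  have hKI : σI.comp (algebraMap K (R ⧸ I)) = (algebraMap K (R ⧸ I)).comp σK :=
    RingHom.ext fun x => congrArg (Ideal.Quotient.mk I) (hKR x)
  let τ : L ⊗[K] (R ⧸ I) →+* L ⊗[K] (R ⧸ I) :=
    Algebra.TensorProduct.mapRingHom (σK : K →+* K) (σL : L →+* L) σI hKL hKI
  let β : R →ₐ[K] L ⊗[K] (R ⧸ I) :=
    Algebra.TensorProduct.includeRight.comp (Ideal.Quotient.mkₐ K I)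
  have hτ : ∀ l, τ (algebraMap L _ l) = algebraMap L _ (σL l) := fun l => by
    simp [τ, Algebra.TensorProduct.algebraMap_apply]
  have hβ : ∀ r, τ (β r) = β (σR r) := fun r =>
    (Algebra.TensorProduct.mapRingHom_tmul ..).trans (by rw [map_one]; rfl)
  have hadjoin : Algebra.adjoin L (Set.range β) = ⊤ := by
    rw [← Algebra.TensorProduct.adjoin_one_tmul_image_eq_top (A := L) _
      (Algebra.adjoin_univ K (R ⧸ I)), Set.image_univ]
    exact congrArg (Algebra.adjoin L)
      ((Ideal.Quotient.mkₐ_surjective K I).range_comp fun x => (1 : L) ⊗ₜ[K] x)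
  have hβ_inj : Injective β :=
    hV.injective_of_adjoin_range_eq_top hRL hgen hconst hτ hβ hadjoin
  refine eq_bot_iff.mpr fun x hx => hβ_inj ?_
  simp [β, Ideal.Quotient.eq_zero_iff_mem.mpr hx]

end Simplicity

/-- If `C_K = D_K`, `R'' = K[V, 1/det V]` is a difference domain for
`σ(X) = AX` whose fraction field `L₁` has constants finite algebraic over `C_K`, then
`R''` is a simple difference ring, i.e. a Picard-Vessiot ring for `σ(X) = AX` over `K`. -/
theorem statement_11 {K : Type} [Field K] [CharZero K] (σK : K ≃+* K)
    (hCD : ∀ a : K, (∃ m, 0 < m ∧ (⇑σK)^[m] a = a) → σK a = a)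
    {n : ℕ} (A : (Matrix (Fin n) (Fin n) K)ˣ)
    {R'' : Type} [CommRing R''] [IsDomain R''] [Algebra K R''] (σ'' : R'' ≃+* R'')
    (hcompat : DiffCompat σK σ'')
    (V : (Matrix (Fin n) (Fin n) R'')ˣ) (hV : FundMatrix σ'' A V)
    (hgen : Algebra.adjoin K
      (entries V.val ∪ entries (↑V⁻¹ : Matrix (Fin n) (Fin n) R'')) = ⊤)
    -- σ extended to the fraction field L₁
    (σL : FractionRing R'' ≃+* FractionRing R'')
    (hσL : ∀ x : R'', σL (algebraMap R'' (FractionRing R'') x) =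
      algebraMap R'' (FractionRing R'') (σ'' x))
    -- C_{L₁} is a finite algebraic extension of C_K
    (hfin : SubfieldFinite
      ((constantsF σK).map ((algebraMap R'' (FractionRing R'')).comp (algebraMap K R'')))
      (constantsF σL)) :
    IsSimpleDiff σ'' ∧ IsPVRing σK σ'' A := by
  have hKL : SubfieldFinite ((constantsF σK).map (algebraMap K (FractionRing R'')))
      (constantsF σL) := by
    rwa [IsScalarTower.algebraMap_eq K R'' (FractionRing R'')]
  have hPV : IsPVRing σK σ'' A :=
    statement_11_general hcompat hσL hV hgen fun _ => isAlgebraic_of_subfieldFinite_map hKL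
  exact ⟨hPV.2.1, hPV⟩

end PV
end
end
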